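/- arXiv:1712.09368 — 5 statements merged into one kernel-verified Lean document; each statement's English description precedes it below -/
import Mathlib

section
/- Fix a subset S ⊆ [n], 0 ≤ τ ≤ 1, and 0 < β < 1; set m = n − |S| and δ = (1/((1−β)m))·log₂(1/P(W_S^{≥1−τ})). Then for every subset T ⊆ [n] ∖ S with |T| ≤ βm, the average, over a uniformly random coordinate j ∈ [n] ∖ (T ∪ S), of the total variation distance ∥P_{X_j Y_j | W_S^{≥1−τ}} − P_{X_j Y_j}∥ is at most √δ. (Here P_{X_j Y_j} = μ, since questions are drawn i.i.d. from μ.) -/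
/-!
Write `P` for the joint law, `W` for the conditioning event and `J` for the set of coordinates
outside `T ∪ S`, with `k = |J|`. The total variation distance between the conditioned and the
unconditioned law of `(X_j, Y_j)` is attained by a test function `φ_j` with values in
`[-1/2, 1/2]`, namely half the sign of the difference. Hence the sum `D` of the distances over
`J` is `E[Z | W]`, where `Z = ∑_{j ∈ J} (φ_j(X_j, Y_j) - E_μ φ_j)`.

For every real `t`, Jensen's inequality gives
`exp (t D) ≤ E[exp (t Z) | W] ≤ E[exp (t Z)] / P(W)`. The question pairs are i.i.d. with law `μ`
(`sum_jointP_mul_prod`), so the last expectation factorises, and Hoeffding's lemma (`hoeffding`)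
bounds it by `exp (k t² / 8)`. Choosing `t = 4 D / k` yields `2 D² ≤ k log (1 / P(W))`
(`two_mul_sq_sum_tvDist_le`). Since `k ≥ (1 - β) (n - |S|)` and `log 2 ≤ 1`, this is stronger than
the bound claimed.
-/

open Finset
open scoped Classical

noncomputable section

/-- Probability of an event under a distribution on a finite type. -/
def pr {Λ : Type*} [Fintype Λ] (P : Λ → ℝ) (E : Λ → Prop) : ℝ :=
  ∑ s, if E s then P s else 0

/-- Distribution (marginal law) of a random variable `Z` under `P`. -/
def distOf {Λ ζ : Type*} [Fintype Λ] (P : Λ → ℝ) (Z : Λ → ζ) (z : ζ) : ℝ :=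
  pr P (fun s => Z s = z)

/-- Conditional distribution of `Z` given the event `E`. -/
def condDist {Λ ζ : Type*} [Fintype Λ] (P : Λ → ℝ) (Z : Λ → ζ) (E : Λ → Prop) (z : ζ) : ℝ :=
  pr P (fun s => Z s = z ∧ E s) / pr P E

/-- Total variation distance between two (finitely supported) distributions. -/
def tvDist {ζ : Type*} [Fintype ζ] (f g : ζ → ℝ) : ℝ :=
  (∑ z, |f z - g z|) / 2

/-- Kullback–Leibler divergence, base 2. -/
def klDiv {ζ : Type*} [Fintype ζ] (f g : ζ → ℝ) : ℝ :=
  ∑ z, if f z = 0 then 0 else f z * Real.logb 2 (f z / g z)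

/-- Shannon mutual information (base 2) of a joint distribution on a product. -/
def mutualInfo {ζ₁ ζ₂ : Type*} [Fintype ζ₁] [Fintype ζ₂] (J : ζ₁ × ζ₂ → ℝ) : ℝ :=
  klDiv J (fun p => (∑ v, J (p.1, v)) * (∑ u, J (u, p.2)))

/-- Sample space for `n` rounds: the questions `x, y`, the answers `a, b`, and the
dependency-breaking coins `d` (`true` = Alice). -/
abbrev Sample (𝒳 𝒴 𝒜 ℬ : Type*) (n : ℕ) : Type _ :=
  (Fin n → 𝒳) × (Fin n → 𝒴) × (Fin n → 𝒜) × (Fin n → ℬ) × (Fin n → Bool)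

namespace Sample

variable {𝒳 𝒴 𝒜 ℬ : Type*} {n : ℕ}

/-- Alice's questions. -/ def x (s : Sample 𝒳 𝒴 𝒜 ℬ n) : Fin n → 𝒳 := s.1
/-- Bob's questions. -/ def y (s : Sample 𝒳 𝒴 𝒜 ℬ n) : Fin n → 𝒴 := s.2.1
/-- Alice's answers. -/ def a (s : Sample 𝒳 𝒴 𝒜 ℬ n) : Fin n → 𝒜 := s.2.2.1
/-- Bob's answers. -/ def b (s : Sample 𝒳 𝒴 𝒜 ℬ n) : Fin n → ℬ := s.2.2.2.1
/-- The coins `D_i` (`true` = Alice). -/ def d (s : Sample 𝒳 𝒴 𝒜 ℬ n) : Fin n → Bool := s.2.2.2.2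

end Sample

variable {𝒳 𝒴 𝒜 ℬ : Type*} [Fintype 𝒳] [Fintype 𝒴] [Fintype 𝒜] [Fintype ℬ] {n : ℕ}

/-- The joint distribution of questions (i.i.d. from `μ`), answers (given by the strategy `q`)
and the uniform dependency-breaking coins. -/
def jointP (μ : 𝒳 × 𝒴 → ℝ)
    (q : (Fin n → 𝒳) → (Fin n → 𝒴) → (Fin n → 𝒜) × (Fin n → ℬ) → ℝ)
    (s : Sample 𝒳 𝒴 𝒜 ℬ n) : ℝ :=
  (∏ i, μ (s.x i, s.y i)) * q s.x s.y (s.a, s.b) * (1 / 2) ^ n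

/-- The event `W_S^{≥ 1-τ}`: at least a `1 - τ` fraction of the coordinates in `S` are won. -/
def winS (V : 𝒳 → 𝒴 → 𝒜 → ℬ → Prop) (S : Finset (Fin n)) (τ : ℝ)
    (s : Sample 𝒳 𝒴 𝒜 ℬ n) : Prop :=
  (1 - τ) * (S.card : ℝ) ≤ ((S.filter (fun i => V (s.x i) (s.y i) (s.a i) (s.b i))).card : ℝ)

/-- The value space of the dependency-breaking variable `Ω = (Ω_1,…,Ω_n, X_S, Y_S)`;
`Ω_i ∈ 𝒳 ⊕ 𝒴` encodes the pair `(D_i, M_i)`. -/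
abbrev OmegaType (𝒳 𝒴 : Type*) {n : ℕ} (S : Finset (Fin n)) : Type _ :=
  (Fin n → 𝒳 ⊕ 𝒴) × ({i : Fin n // i ∈ S} → 𝒳) × ({i : Fin n // i ∈ S} → 𝒴)

/-- The dependency-breaking random variable `Ω`. -/
def omegaRV (S : Finset (Fin n)) (s : Sample 𝒳 𝒴 𝒜 ℬ n) : OmegaType 𝒳 𝒴 S :=
  (fun i => if s.d i then Sum.inl (s.x i) else Sum.inr (s.y i),
   fun i => s.x i.1, fun i => s.y i.1)

/-- The value space of `Ω_{-j}` (`Ω` with its `j`-th coordinate omitted). -/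
abbrev OmegaMinusType (𝒳 𝒴 : Type*) {n : ℕ} (S : Finset (Fin n)) (j : Fin n) : Type _ :=
  ({i : Fin n // i ≠ j} → 𝒳 ⊕ 𝒴) × ({i : Fin n // i ∈ S} → 𝒳) × ({i : Fin n // i ∈ S} → 𝒴)

/-- The random variable `Ω_{-j}`. -/
def omegaMinusRV (S : Finset (Fin n)) (j : Fin n) (s : Sample 𝒳 𝒴 𝒜 ℬ n) :
    OmegaMinusType 𝒳 𝒴 S j :=
  (fun i => if s.d i.1 then Sum.inl (s.x i.1) else Sum.inr (s.y i.1),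
   fun i => s.x i.1, fun i => s.y i.1)

/-- The value space of `R_{Tj} = (Ω_{-j}, X_T, A_{S∪T}, B_S)`. -/
abbrev RType (𝒳 𝒴 𝒜 ℬ : Type*) {n : ℕ} (S T : Finset (Fin n)) (j : Fin n) : Type _ :=
  OmegaMinusType 𝒳 𝒴 S j × ({i : Fin n // i ∈ T} → 𝒳) ×
    ({i : Fin n // i ∈ S ∪ T} → 𝒜) × ({i : Fin n // i ∈ S} → ℬ)

/-- The random variable `R_{Tj} = (Ω_{-j}, X_T, A_{S∪T}, B_S)`. -/
def rRV (S T : Finset (Fin n)) (j : Fin n) (s : Sample 𝒳 𝒴 𝒜 ℬ n) : RType 𝒳 𝒴 𝒜 ℬ S T j :=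
  (omegaMinusRV S j s, fun i => s.x i.1, fun i => s.a i.1, fun i => s.b i.1)


/-- Hoeffding's lemma for a probability vector on a finite type and a function with values in
`[-1/2, 1/2]`. -/
lemma hoeffding {ζ : Type*} [Fintype ζ] (μ : ζ → ℝ) (h0 : ∀ z, 0 ≤ μ z) (h1 : ∑ z, μ z = 1)
    (φ : ζ → ℝ) (hφ : ∀ z, φ z ∈ Set.Icc (-(1 / 2) : ℝ) (1 / 2)) (t : ℝ) :
    ∑ z, μ z * Real.exp (t * (φ z - ∑ w, μ w * φ w)) ≤ Real.exp (t ^ 2 / 8) := by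
  letI : MeasurableSpace ζ := ⊤
  haveI : MeasurableSingletonClass ζ := ⟨fun _ => trivial⟩
  have hs : ∑ z, ENNReal.ofReal (μ z) = 1 := by
    rw [← ENNReal.ofReal_sum_of_nonneg (fun z _ => h0 z), h1, ENNReal.ofReal_one]
  let p : PMF ζ := PMF.ofFintype (fun z => ENNReal.ofReal (μ z)) hs
  have hint : ∀ f : ζ → ℝ, ∫ z, f z ∂p.toMeasure = ∑ z, μ z * f z := by
    intro f
    rw [PMF.integral_eq_sum]
    refine Finset.sum_congr rfl fun z _ => ?_
    simp [p, ENNReal.toReal_ofReal (h0 z)]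
  have h := (ProbabilityTheory.hasSubgaussianMGF_of_mem_Icc (μ := p.toMeasure) (X := φ)
    (a := -(1 / 2)) (b := 1 / 2) (measurable_from_top.aemeasurable)
    (Filter.Eventually.of_forall hφ)).mgf_le t
  rw [ProbabilityTheory.mgf, hint, hint] at h
  refine h.trans (le_of_eq ?_)
  congr 1
  norm_num
  ring

/-- The question pairs are i.i.d. with law `μ`: the expectation of a product of functions of the
individual question pairs is the product of the expectations. -/
lemma sum_jointP_mul_prod (μ : 𝒳 × 𝒴 → ℝ)
    (q : (Fin n → 𝒳) → (Fin n → 𝒴) → (Fin n → 𝒜) × (Fin n → ℬ) → ℝ)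
    (hq1 : ∀ x y, ∑ ab, q x y ab = 1) (G : Fin n → 𝒳 × 𝒴 → ℝ) :
    ∑ s : Sample 𝒳 𝒴 𝒜 ℬ n, jointP μ q s * ∏ i, G i (s.x i, s.y i)
      = ∏ i, ∑ z, μ z * G i z := by
  have hcoin : ∑ _d : Fin n → Bool, ((1 : ℝ) / 2) ^ n = 1 := by
    simp [← mul_pow]
  have hans : ∀ x y, ∑ a, ∑ b, q x y (a, b) = 1 := by
    intro x y
    rw [← hq1 x y, Fintype.sum_prod_type]
  rw [Finset.prod_univ_sum, Fintype.piFinset_univ,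
    ← (Equiv.arrowProdEquivProdArrow (Fin n) (fun _ => 𝒳) (fun _ => 𝒴)).symm.sum_comp,
    Fintype.sum_prod_type, Fintype.sum_prod_type]
  refine Finset.sum_congr rfl fun x _ => ?_
  rw [Fintype.sum_prod_type]
  refine Finset.sum_congr rfl fun y _ => ?_
  calc _ = ∑ a, ∑ b, ∑ d : Fin n → Bool,
        (∏ i, (μ (x i, y i) * G i (x i, y i))) * (q x y (a, b) * (1 / 2) ^ n) := by
        simp only [Fintype.sum_prod_type]
        refine Finset.sum_congr rfl fun a _ => Finset.sum_congr rfl fun b _ =>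
          Finset.sum_congr rfl fun d _ => ?_
        simp only [jointP, Sample.x, Sample.y, Sample.a, Sample.b, Finset.prod_mul_distrib]
        ring
    _ = ∏ i, (μ (x i, y i) * G i (x i, y i)) := by
        simp only [← Finset.mul_sum, hcoin, mul_one, hans]
    _ = _ := rfl

lemma jointP_nonneg (μ : 𝒳 × 𝒴 → ℝ) (hμ0 : ∀ p, 0 ≤ μ p)
    (q : (Fin n → 𝒳) → (Fin n → 𝒴) → (Fin n → 𝒜) × (Fin n → ℬ) → ℝ)
    (hq0 : ∀ x y ab, 0 ≤ q x y ab) (s : Sample 𝒳 𝒴 𝒜 ℬ n) : 0 ≤ jointP μ q s :=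
  mul_nonneg (mul_nonneg (Finset.prod_nonneg fun _ _ => hμ0 _) (hq0 _ _ _)) (by positivity)

lemma distOf_question (μ : 𝒳 × 𝒴 → ℝ) (hμ1 : ∑ p, μ p = 1)
    (q : (Fin n → 𝒳) → (Fin n → 𝒴) → (Fin n → 𝒜) × (Fin n → ℬ) → ℝ)
    (hq1 : ∀ x y, ∑ ab, q x y ab = 1) (j : Fin n) :
    distOf (jointP μ q) (fun s => (s.x j, s.y j)) = μ := by
  funext z
  have h := sum_jointP_mul_prod μ q hq1
    (fun i w => if i = j then (if w = z then 1 else 0) else 1)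
  have hr : ∏ i : Fin n, ∑ w, μ w * (if i = j then (if w = z then 1 else 0) else 1) = μ z := by
    rw [Finset.prod_eq_single j]
    · simp
    · intro i _ hij
      simp [hij, hμ1]
    · simp
  rw [hr] at h
  rw [← h, distOf, pr]
  refine Finset.sum_congr rfl fun s _ => ?_
  simp

/-- Change of variables for the conditional law. -/
lemma sum_condDist_mul {Λ ζ : Type*} [Fintype Λ] [Fintype ζ] (P : Λ → ℝ) (Z : Λ → ζ)
    (E : Λ → Prop) (φ : ζ → ℝ) :
    ∑ z, condDist P Z E z * φ z = ∑ s, (if E s then P s else 0) / pr P E * φ (Z s) := by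
  have h : ∀ z, condDist P Z E z * φ z
      = ∑ s, if Z s = z then (if E s then P s else 0) / pr P E * φ (Z s) else 0 := by
    intro z
    rw [condDist, pr, Finset.sum_div, Finset.sum_mul]
    refine Finset.sum_congr rfl fun s _ => ?_
    by_cases hz : Z s = z
    · simp [hz]
    · simp [hz]
  simp only [h]
  rw [Finset.sum_comm]
  simp

/-- The concentration bound for an arbitrary event `E` and set of coordinates `J`. -/
lemma two_mul_sq_sum_tvDist_le (μ : 𝒳 × 𝒴 → ℝ) (hμ0 : ∀ p, 0 ≤ μ p) (hμ1 : ∑ p, μ p = 1)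
    (q : (Fin n → 𝒳) → (Fin n → 𝒴) → (Fin n → 𝒜) × (Fin n → ℬ) → ℝ)
    (hq0 : ∀ x y ab, 0 ≤ q x y ab) (hq1 : ∀ x y, ∑ ab, q x y ab = 1)
    (E : Sample 𝒳 𝒴 𝒜 ℬ n → Prop) (hE : 0 < pr (jointP μ q) E)
    (J : Finset (Fin n)) (hJ : 0 < J.card) :
    2 * (∑ j ∈ J, tvDist (condDist (jointP μ q) (fun s => (s.x j, s.y j)) E)
        (distOf (jointP μ q) (fun s => (s.x j, s.y j)))) ^ 2
      ≤ J.card * Real.log (1 / pr (jointP μ q) E) := by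
  set P := jointP μ q with hP
  set p := pr P E with hp
  let f : Fin n → 𝒳 × 𝒴 → ℝ := fun j => condDist P (fun s => (s.x j, s.y j)) E
  let φ : Fin n → 𝒳 × 𝒴 → ℝ := fun j z => if 0 ≤ f j z - μ z then 1 / 2 else -(1 / 2)
  have hφ : ∀ j z, φ j z ∈ Set.Icc (-(1 / 2) : ℝ) (1 / 2) := by
    intro j z
    simp only [φ]
    split_ifs <;> norm_num
  let ψ : Fin n → 𝒳 × 𝒴 → ℝ := fun j z => φ j z - ∑ w, μ w * φ j w
  let w : Sample 𝒳 𝒴 𝒜 ℬ n → ℝ := fun s => (if E s then P s else 0) / p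
  have hP0 : ∀ s, 0 ≤ P s := jointP_nonneg μ hμ0 q hq0
  have hw0 : ∀ s, 0 ≤ w s := by
    intro s
    refine div_nonneg ?_ hE.le
    split_ifs
    · exact hP0 s
    · exact le_rfl
  have hw1 : ∑ s, w s = 1 := by
    rw [← Finset.sum_div]
    exact div_self hE.ne'
  have htv : ∀ j, tvDist (f j) (distOf P (fun s => (s.x j, s.y j)))
      = ∑ s, w s * ψ j (s.x j, s.y j) := by
    intro j
    have h1 : ∑ s, w s * φ j (s.x j, s.y j) = ∑ z, f j z * φ j z :=
      (sum_condDist_mul P (fun s => (s.x j, s.y j)) E (φ j)).symm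
    rw [hP, distOf_question μ hμ1 q hq1 j, tvDist]
    simp only [ψ, mul_sub]
    rw [Finset.sum_sub_distrib, ← Finset.sum_mul, hw1, one_mul, h1, ← Finset.sum_sub_distrib,
      Finset.sum_div]
    refine Finset.sum_congr rfl fun z _ => ?_
    simp only [φ]
    split_ifs with hz
    · rw [abs_of_nonneg hz]; ring
    · rw [abs_of_neg (not_le.mp hz)]; ring
  set D := ∑ j ∈ J, tvDist (f j) (distOf P (fun s => (s.x j, s.y j))) with hD
  have hDZ : D = ∑ s, w s * ∑ j ∈ J, ψ j (s.x j, s.y j) := by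
    simp only [hD, htv, Finset.mul_sum]
    rw [Finset.sum_comm]
  have key : ∀ t : ℝ, t * D ≤ J.card * (t ^ 2 / 8) + Real.log (1 / p) := by
    intro t
    have hjensen : Real.exp (t * D)
        ≤ ∑ s, w s * Real.exp (t * ∑ j ∈ J, ψ j (s.x j, s.y j)) := by
      have h := convexOn_exp.map_sum_le (t := Finset.univ) (w := w)
        (p := fun s => t * ∑ j ∈ J, ψ j (s.x j, s.y j))
        (fun s _ => hw0 s) hw1 (fun _ _ => Set.mem_univ _)
      simp only [smul_eq_mul] at h
      refine le_trans (le_of_eq ?_) h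
      rw [hDZ, Finset.mul_sum]
      congr 1
      exact Finset.sum_congr rfl fun s _ => by ring
    have hdrop : ∑ s, w s * Real.exp (t * ∑ j ∈ J, ψ j (s.x j, s.y j))
        ≤ (∑ s, P s * Real.exp (t * ∑ j ∈ J, ψ j (s.x j, s.y j))) / p := by
      rw [Finset.sum_div]
      refine Finset.sum_le_sum fun s _ => ?_
      rw [mul_div_right_comm]
      refine mul_le_mul_of_nonneg_right ?_ (Real.exp_pos _).le
      refine div_le_div_of_nonneg_right ?_ hE.le
      split_ifs
      · exact le_rfl
      · exact hP0 s
    have hfactor : ∑ s, P s * Real.exp (t * ∑ j ∈ J, ψ j (s.x j, s.y j))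
        = ∏ j ∈ J, ∑ z, μ z * Real.exp (t * ψ j z) := by
      have h := sum_jointP_mul_prod μ q hq1
        (fun i z => if i ∈ J then Real.exp (t * ψ i z) else 1)
      have hr : ∏ i : Fin n, ∑ z, μ z * (if i ∈ J then Real.exp (t * ψ i z) else 1)
          = ∏ j ∈ J, ∑ z, μ z * Real.exp (t * ψ j z) := by
        rw [← Finset.prod_subset (Finset.subset_univ J)]
        · exact Finset.prod_congr rfl fun i hi => by simp [hi]
        · intro i _ hi
          simp [hi, hμ1]
      rw [← hr, ← h]
      refine Finset.sum_congr rfl fun s _ => ?_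
      rw [Finset.mul_sum, Real.exp_sum, Finset.prod_ite_mem, Finset.univ_inter]
    have hprod : ∏ j ∈ J, ∑ z, μ z * Real.exp (t * ψ j z)
        ≤ Real.exp (J.card * (t ^ 2 / 8)) := by
      rw [Real.exp_nat_mul]
      rw [← Finset.prod_const]
      exact Finset.prod_le_prod
        (fun j _ => Finset.sum_nonneg fun z _ => mul_nonneg (hμ0 z) (Real.exp_pos _).le)
        (fun j _ => hoeffding μ hμ0 hμ1 (φ j) (hφ j) t)
    have hfin : Real.exp (t * D) ≤ Real.exp (J.card * (t ^ 2 / 8) + Real.log (1 / p)) := by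
      rw [Real.exp_add, Real.exp_log (by positivity), mul_one_div]
      refine (hjensen.trans hdrop).trans ?_
      rw [hfactor]
      exact div_le_div_of_nonneg_right hprod hE.le
    exact Real.exp_le_exp.mp hfin
  have hk : (0 : ℝ) < J.card := by exact_mod_cast hJ
  -- `t = 4 D / k` optimises the bound.
  have h := key (4 * D / J.card)
  have h2 : 4 * D / J.card * D - J.card * ((4 * D / J.card) ^ 2 / 8) = 2 * D ^ 2 / J.card := by
    field_simp
    ring
  have h3 : 2 * D ^ 2 / J.card ≤ Real.log (1 / p) := by linarith
  rwa [div_le_iff₀' hk] at h3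

/-- The paper's Lemma 3.2: conditioned on the event `W_S^{≥1-τ}`, the distribution of the
questions in an average coordinate `j ∉ T ∪ S` is `√δ`-close in total variation to the
unconditioned question distribution, where
`δ = (1/((1-β)m))·log₂(1/P(W_S^{≥1-τ}))` and `m = n - |S|`. -/
theorem input_distribution_unchanged
    {𝒳 𝒴 𝒜 ℬ : Type*} [Fintype 𝒳] [Fintype 𝒴] [Fintype 𝒜] [Fintype ℬ] {n : ℕ}
    (μ : 𝒳 × 𝒴 → ℝ) (hμ0 : ∀ p, 0 ≤ μ p) (hμ1 : ∑ p, μ p = 1)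
    (q : (Fin n → 𝒳) → (Fin n → 𝒴) → (Fin n → 𝒜) × (Fin n → ℬ) → ℝ)
    (hq0 : ∀ x y ab, 0 ≤ q x y ab) (hq1 : ∀ x y, ∑ ab, q x y ab = 1)
    (hNSA : ∀ x y y' a, (∑ b, q x y (a, b)) = ∑ b, q x y' (a, b))
    (hNSB : ∀ x x' y b, (∑ a, q x y (a, b)) = ∑ a, q x' y (a, b))
    (V : 𝒳 → 𝒴 → 𝒜 → ℬ → Prop)
    (S : Finset (Fin n)) (τ : ℝ) (hτ0 : 0 ≤ τ) (hτ1 : τ ≤ 1)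
    (hW : 0 < pr (jointP μ q) (winS V S τ))
    (β : ℝ) (hβ0 : 0 < β) (hβ1 : β < 1)
    (T : Finset (Fin n)) (hTS : Disjoint T S)
    (hT : (T.card : ℝ) ≤ β * ((n - S.card : ℕ) : ℝ)) :
    (∑ j ∈ Finset.univ \ (T ∪ S),
        tvDist (condDist (jointP μ q) (fun s => (s.x j, s.y j)) (winS V S τ))
               (distOf (jointP μ q) (fun s => (s.x j, s.y j))))
      / ((Finset.univ \ (T ∪ S)).card : ℝ)
    ≤ Real.sqrt ((1 / ((1 - β) * ((n - S.card : ℕ) : ℝ))) *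
        Real.logb 2 (1 / pr (jointP μ q) (winS V S τ))) := by
  set D := ∑ j ∈ Finset.univ \ (T ∪ S),
        tvDist (condDist (jointP μ q) (fun s => (s.x j, s.y j)) (winS V S τ))
               (distOf (jointP μ q) (fun s => (s.x j, s.y j))) with hD
  rcases Nat.eq_zero_or_pos (Finset.univ \ (T ∪ S)).card with h0 | hpos
  · rw [h0, Nat.cast_zero, div_zero]
    exact Real.sqrt_nonneg _
  have hmain := two_mul_sq_sum_tvDist_le μ hμ0 hμ1 q hq0 hq1 (winS V S τ) hW _ hpos
  rw [← hD] at hmain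
  have hcard : (Finset.univ \ (T ∪ S)).card + T.card = n - S.card := by
    have h1 := Finset.card_sdiff_add_card_eq_card (Finset.subset_univ (T ∪ S))
    rw [Finset.card_union_of_disjoint hTS, Finset.card_univ, Fintype.card_fin] at h1
    omega
  have hcardR : ((Finset.univ \ (T ∪ S)).card : ℝ) + T.card = ((n - S.card : ℕ) : ℝ) := by
    exact_mod_cast hcard
  set k : ℝ := ((Finset.univ \ (T ∪ S)).card : ℝ) with hk
  set m : ℝ := ((n - S.card : ℕ) : ℝ) with hm
  have hkpos : 0 < k := by
    rw [hk]
    exact_mod_cast hpos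
  have hmpos : 0 < m := by
    have : (0 : ℝ) ≤ T.card := Nat.cast_nonneg _
    linarith
  have hkm : (1 - β) * m ≤ k := by linarith
  have hbm : 0 < (1 - β) * m := mul_pos (by linarith) hmpos
  set L := Real.log (1 / pr (jointP μ q) (winS V S τ)) with hL
  have hL0 : 0 ≤ L := by
    by_contra hneg
    nlinarith [sq_nonneg D]
  have hlog : L ≤ Real.logb 2 (1 / pr (jointP μ q) (winS V S τ)) := by
    rw [Real.logb, ← hL, le_div_iff₀ (Real.log_pos one_lt_two)]
    have : Real.log 2 ≤ 1 := by linarith [Real.log_two_lt_d9]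
    nlinarith
  apply Real.le_sqrt_of_sq_le
  calc (D / k) ^ 2 ≤ 1 / k * L := by
        rw [div_pow, div_le_iff₀ (by positivity)]
        have : 1 / k * L * k ^ 2 = k * L := by field_simp
        rw [this]
        nlinarith [sq_nonneg D]
    _ ≤ 1 / ((1 - β) * m) * L :=
        mul_le_mul_of_nonneg_right (one_div_le_one_div_of_le hbm hkm) hL0
    _ ≤ _ := mul_le_mul_of_nonneg_left hlog (by positivity)

end
end

section
/- Fix a subset S ⊆ [n], 0 ≤ τ ≤ 1, and 0 < β < 1; set m = n − |S| and δ′ = (1/((1−β)m))·( log₂(1/P(W_S^{≥1−τ})) + (2|S| + βm)·log₂|𝒜 × ℬ| ). Then for every subset T ⊆ [n] ∖ S with |T| ≤ βm: E_j E_{(x_j, y_j, r_{Tj})} [ ∥P_{A_j | R_{Tj} = r_{Tj}, X_j = x_j, Y_j = y_j, W_S^{≥1−τ}} − P_{A_j | R_{Tj} = r_{Tj}, X_j = x_j, W_S^{≥1−τ}}∥ ] ≤ √(2δ′), where j is a uniformly random coordinate of [n] ∖ (T ∪ S) and (x_j, y_j, r_{Tj}) is drawn from the conditional distribution P_{X_j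 Y_j R_{Tj} | W_S^{≥1−τ}}. -/
/-!
Write `Q = P(· | W)`, `J = [n] ∖ (T ∪ S)`, and for `j ∈ J` let
`φ_j = Q(Y_j | X_j, A_j, R_{Tj}) / μ(Y_j | X_j)`.

The key estimate (`moment_bound`) is `E_P[∏_{j ∈ J, D_j = Alice} φ_j] ≤ |ℬ|^|S|`. For each of the
`|ℬ|^|S|` possible values of `b_S`, replace `B_S` by that constant in the integrand. By
no-signaling Alice's answers are then independent of `Y` given `X`. For fixed `x, a, d, b_S` the
variables `R_{Tj}` do not involve the coordinates `y_i` with `i ∈ J` and `d_i = Alice`, so the sum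
over those coordinates factorizes and each factor is at most `μ(x_j)` (`sum_y_le`).

Jensen's inequality for `log` under `Q` turns this into
`∑_{j ∈ J} E_Q[1_{D_j = Alice} log φ_j] ≤ log (|ℬ|^|S| / P(W))`. Neither `φ_j` nor the weight
`Q` depends on the coin `D_j`, so each term equals `E_Q[log φ_j] / 2` (`two_mul_sum_coin`).

Conversely `E_Q[log φ_j]` is at least the conditional mutual information of `A_j` and `Y_j` given
`(X_j, R_{Tj})` under `Q`, by Gibbs' inequality, and this dominates the square of the expected total
variation distance, by a Pinsker-type inequality obtained from the Hellinger distance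
(`core_ineq`, `expected_tv_sq_le`). Its constant is weaker than that of Pinsker by a factor `2`,
which still suffices for the bound `√(2δ')`. Cauchy–Schwarz over `j` finishes the proof.
-/

open Finset
open scoped Classical

noncomputable section

variable {𝒳 𝒴 𝒜 ℬ : Type*} [Fintype 𝒳] [Fintype 𝒴] [Fintype 𝒜] [Fintype ℬ] {n : ℕ}

/-! ### Two inequalities for finite sums -/

/-- A sum of a product over coordinates factorizes once the coordinates outside `J` are fixed: the
factors indexed by `J` depend on the other coordinates only outside `J`, and the remaining factors
depend on nothing but their own coordinate. -/
lemma sum_pi_prod_le {ι Y : Type*} [Fintype ι] [DecidableEq ι] [Fintype Y] (J : ι → Prop)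
    (F : ι → (ι → Y) → Y → ℝ) (hF0 : ∀ j y v, 0 ≤ F j y v) (c : ι → ℝ) (hc0 : ∀ j, 0 ≤ c j)
    (hc : ∀ j y, ∑ v, F j y v ≤ c j)
    (hdep : ∀ j y y', (∀ i, ¬ J i → y i = y' i) → F j y = F j y')
    (hind : ∀ j, ¬ J j → ∀ y y', F j y = F j y') :
    ∑ y : ι → Y, ∏ j, F j y (y j) ≤ ∏ j, c j := by
  rcases isEmpty_or_nonempty (ι → Y) with h | ⟨⟨y0⟩⟩
  · simpa using Finset.prod_nonneg (fun j _ => hc0 j)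
  let e := Equiv.piEquivPiSubtypeProd (fun i => J i) (fun _ : ι => Y)
  -- the value of `glue w` on `J` is irrelevant by `hdep`
  let glue : ({i // ¬ J i} → Y) → ι → Y := fun w i => if h : J i then y0 i else w ⟨i, h⟩
  have key : ∀ u w, ∏ j, F j (e.symm (u, w)) ((e.symm (u, w)) j) =
      (∏ j : {i // J i}, F j (glue w) (u j)) * ∏ j : {i // ¬ J i}, F j y0 (w j) := by
    intro u w
    rw [← Fintype.prod_subtype_mul_prod_subtype (fun i => J i)]
    congr 1
    · refine Finset.prod_congr rfl fun j _ => ?_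
      rw [hdep j (e.symm (u, w)) (glue w)]
      · simp [e, Equiv.piEquivPiSubtypeProd, j.2]
      · intro i hi
        simp [e, Equiv.piEquivPiSubtypeProd, glue, hi]
    · refine Finset.prod_congr rfl fun j _ => ?_
      rw [hind j j.2 (e.symm (u, w)) y0]
      simp [e, Equiv.piEquivPiSubtypeProd, j.2]
  rw [← e.symm.sum_comp, Fintype.sum_prod_type_right]
  simp only [key, ← Finset.sum_mul]
  have h1 : ∀ w, ∑ u : {i // J i} → Y, ∏ j : {i // J i}, F j (glue w) (u j)
      ≤ ∏ j : {i // J i}, c j := by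
    intro w
    rw [← Fintype.piFinset_univ, Finset.sum_prod_piFinset]
    exact Finset.prod_le_prod (fun j _ => Finset.sum_nonneg fun _ _ => hF0 _ _ _)
      fun j _ => hc _ _
  have h2 : ∑ w : {i // ¬ J i} → Y, ∏ j : {i // ¬ J i}, F j y0 (w j)
      ≤ ∏ j : {i // ¬ J i}, c j := by
    rw [← Fintype.piFinset_univ,
      Finset.sum_prod_piFinset Finset.univ (fun j : {i // ¬ J i} => F j y0)]
    exact Finset.prod_le_prod (fun j _ => Finset.sum_nonneg fun _ _ => hF0 _ _ _)
      fun j _ => hc _ _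
  calc _ ≤ ∑ w : {i // ¬ J i} → Y, (∏ j : {i // J i}, c j) *
        ∏ j : {i // ¬ J i}, F j y0 (w j) := by
        refine Finset.sum_le_sum fun w _ => mul_le_mul_of_nonneg_right (h1 w) ?_
        exact Finset.prod_nonneg fun j _ => hF0 _ _ _
    _ ≤ (∏ j : {i // J i}, c j) * ∏ j : {i // ¬ J i}, c j := by
        rw [← Finset.mul_sum]
        exact mul_le_mul_of_nonneg_left h2 (Finset.prod_nonneg fun j _ => hc0 _)
    _ = _ := Fintype.prod_subtype_mul_prod_subtype (fun i => J i) c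

/-- For a joint law `N` of `(c, y, a)`, the `ℓ¹` distance between `N` and the law making `y` and `a`
independent given `c` is at most twice the square root of `E log (N(y | c, a) / κ(y | c))`, for any
reference kernel `κ`. The right-hand side is the conditional mutual information plus a divergence
`D(N(y | c) ‖ κ(y | c)) ≥ 0`; the former dominates the squared Hellinger distance. -/
lemma core_ineq {C Y A : Type*} [Fintype C] [Fintype Y] [Fintype A]
    (N : C → Y → A → ℝ) (hN : ∀ c y a, 0 ≤ N c y a) (hN1 : ∑ c, ∑ y, ∑ a, N c y a = 1)
    (κ : C → Y → ℝ) (hκ0 : ∀ c y, 0 ≤ κ c y) (hκ1 : ∀ c, ∑ y, κ c y ≤ 1)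
    (hκ : ∀ c y a, 0 < N c y a → 0 < κ c y) :
    (∑ c, ∑ y, ∑ a, |N c y a - (∑ a', N c y a') *
        ((∑ y', N c y' a) / ∑ y', ∑ a', N c y' a')|) ^ 2 ≤
      4 * ∑ c, ∑ y, ∑ a, N c y a * Real.log (N c y a / ((∑ y', N c y' a) * κ c y)) := by
  set U : C → Y → ℝ := fun c y => ∑ a', N c y a' with hU
  set W : C → A → ℝ := fun c a => ∑ y', N c y' a with hWdef
  set Z : C → ℝ := fun c => ∑ y', U c y' with hZ
  set q : C → Y → A → ℝ := fun c y a => U c y * (W c a / Z c) with hq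
  have hU0 : ∀ c y, 0 ≤ U c y := fun c y => Finset.sum_nonneg fun _ _ => hN _ _ _
  have hW0 : ∀ c a, 0 ≤ W c a := fun c y => Finset.sum_nonneg fun _ _ => hN _ _ _
  have hZ0 : ∀ c, 0 ≤ Z c := fun c => Finset.sum_nonneg fun _ _ => hU0 _ _
  have hq0 : ∀ c y a, 0 ≤ q c y a := fun c y a =>
    mul_nonneg (hU0 _ _) (div_nonneg (hW0 _ _) (hZ0 _))
  have hUN : ∀ c y a, N c y a ≤ U c y := fun c y a =>
    Finset.single_le_sum (f := fun a => N c y a) (fun _ _ => hN _ _ _) (Finset.mem_univ a)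
  have hWN : ∀ c y a, N c y a ≤ W c a := fun c y a =>
    Finset.single_le_sum (f := fun y => N c y a) (fun _ _ => hN _ _ _) (Finset.mem_univ y)
  have hZU : ∀ c y, U c y ≤ Z c := fun c y =>
    Finset.single_le_sum (f := fun y => U c y) (fun _ _ => hU0 _ _) (Finset.mem_univ y)
  have hZW : ∀ c, ∑ a, W c a = Z c := fun c => Finset.sum_comm
  have hZ1 : ∑ c, Z c = 1 := hN1
  have hqs : ∑ c, ∑ y, ∑ a, q c y a ≤ 1 := by
    rw [← hZ1]
    refine Finset.sum_le_sum fun c _ => ?_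
    simp only [hq, ← Finset.mul_sum, ← Finset.sum_mul, ← Finset.sum_div, hZW]
    change Z c * (Z c / Z c) ≤ Z c
    exact mul_le_of_le_one_right (hZ0 c) (div_self_le_one _)
  -- `log t ≥ 1 - 1/t` at `t = √(N/q)` (Hellinger) and at `t = U/(Z κ)` (Gibbs), using
  -- `N/(W κ) = (N/q) · (U/(Z κ))`
  have hpt : ∀ c y a, (Real.sqrt (N c y a) - Real.sqrt (q c y a)) ^ 2 + N c y a - q c y a
      + N c y a * (1 - Z c * κ c y / U c y)
      ≤ N c y a * Real.log (N c y a / (W c a * κ c y)) := by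
    intro c y a
    have e1 : (Real.sqrt (N c y a) - Real.sqrt (q c y a)) ^ 2 + N c y a - q c y a
        = 2 * N c y a - 2 * (Real.sqrt (N c y a) * Real.sqrt (q c y a)) := by
      have := Real.sq_sqrt (hN c y a)
      have := Real.sq_sqrt (hq0 c y a)
      nlinarith
    rw [e1]
    rcases (hN c y a).eq_or_lt with h | h
    · simp [← h]
    have hUp := h.trans_le (hUN c y a)
    have hWp := h.trans_le (hWN c y a)
    have hZp := hUp.trans_le (hZU c y)
    have hκp := hκ c y a h
    have hqp : 0 < q c y a := by positivity
    have e2 : Real.log (N c y a / (W c a * κ c y)) =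
        - 2 * Real.log (Real.sqrt (q c y a) / Real.sqrt (N c y a))
        - Real.log (Z c * κ c y / U c y) := by
      rw [Real.log_div (by positivity) (by positivity), Real.log_div (by positivity) (by positivity),
        Real.log_div (by positivity) (by positivity), Real.log_sqrt hqp.le, Real.log_sqrt h.le,
        Real.log_mul (by positivity) (by positivity), Real.log_mul (by positivity) (by positivity)]
      rw [Real.log_mul (by positivity) (by positivity), Real.log_div (by positivity) (by positivity)]
      ring
    have l1 := Real.log_le_sub_one_of_pos
      (show 0 < Real.sqrt (q c y a) / Real.sqrt (N c y a) by positivity)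
    have l2 := Real.log_le_sub_one_of_pos (show 0 < Z c * κ c y / U c y by positivity)
    have e3 : N c y a * (Real.sqrt (q c y a) / Real.sqrt (N c y a))
        = Real.sqrt (N c y a) * Real.sqrt (q c y a) := by
      have hs : Real.sqrt (N c y a) ≠ 0 := by positivity
      have := Real.mul_self_sqrt h.le
      field_simp
      rw [sq, this]
    rw [e2]
    have m1 := mul_le_mul_of_nonneg_left l1 h.le
    have m2 := mul_le_mul_of_nonneg_left l2 h.le
    rw [mul_sub, e3] at m1
    nlinarith
  have hG : 0 ≤ ∑ c, ∑ y, ∑ a, N c y a * (1 - Z c * κ c y / U c y) := by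
    have : ∀ c, 0 ≤ ∑ y, ∑ a, N c y a * (1 - Z c * κ c y / U c y) := by
      intro c
      have : ∀ y, U c y - Z c * κ c y ≤ ∑ a, N c y a * (1 - Z c * κ c y / U c y) := by
        intro y
        rw [← Finset.sum_mul]
        change _ ≤ U c y * _
        rcases (hU0 c y).eq_or_lt with h | h
        · rw [← h]; simpa using mul_nonneg (hZ0 c) (hκ0 c y)
        · rw [mul_sub, mul_div_cancel₀ _ h.ne', mul_one]
      refine le_trans ?_ (Finset.sum_le_sum fun y _ => this y)
      rw [Finset.sum_sub_distrib, ← Finset.mul_sum]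
      change 0 ≤ Z c - _
      nlinarith [hκ1 c, hZ0 c]
    exact Finset.sum_nonneg fun c _ => this c
  have hD : ∑ c, ∑ y, ∑ a, (Real.sqrt (N c y a) - Real.sqrt (q c y a)) ^ 2 ≤
      ∑ c, ∑ y, ∑ a, N c y a * Real.log (N c y a / (W c a * κ c y)) := by
    have := Finset.sum_le_sum fun c (_ : c ∈ Finset.univ) =>
      Finset.sum_le_sum fun y (_ : y ∈ Finset.univ) =>
      Finset.sum_le_sum fun a (_ : a ∈ Finset.univ) => hpt c y a
    simp only [Finset.sum_add_distrib, Finset.sum_sub_distrib] at this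
    linarith
  have hS : ∑ c, ∑ y, ∑ a, (Real.sqrt (N c y a) + Real.sqrt (q c y a)) ^ 2 ≤ 4 := by
    have : ∀ c y a, (Real.sqrt (N c y a) + Real.sqrt (q c y a)) ^ 2
        ≤ 2 * N c y a + 2 * q c y a := by
      intro c y a
      have := Real.sq_sqrt (hN c y a)
      have := Real.sq_sqrt (hq0 c y a)
      nlinarith [sq_nonneg (Real.sqrt (N c y a) - Real.sqrt (q c y a))]
    have := Finset.sum_le_sum fun c (_ : c ∈ Finset.univ) =>
      Finset.sum_le_sum fun y (_ : y ∈ Finset.univ) =>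
      Finset.sum_le_sum fun a (_ : a ∈ Finset.univ) => this c y a
    simp only [Finset.sum_add_distrib, ← Finset.mul_sum] at this
    linarith
  have hCS : (∑ c, ∑ y, ∑ a, |N c y a - q c y a|) ^ 2 ≤
      (∑ c, ∑ y, ∑ a, (Real.sqrt (N c y a) + Real.sqrt (q c y a)) ^ 2) *
      (∑ c, ∑ y, ∑ a, (Real.sqrt (N c y a) - Real.sqrt (q c y a)) ^ 2) := by
    have hprod : ∀ f : C → Y → A → ℝ, ∑ c, ∑ y, ∑ a, f c y a =
        ∑ p : C × Y × A, f p.1 p.2.1 p.2.2 := by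
      intro f; simp [Fintype.sum_prod_type]
    rw [hprod, hprod, hprod]
    have := Finset.sum_mul_sq_le_sq_mul_sq (Finset.univ : Finset (C × Y × A))
      (fun p => Real.sqrt (N p.1 p.2.1 p.2.2) + Real.sqrt (q p.1 p.2.1 p.2.2))
      (fun p => |Real.sqrt (N p.1 p.2.1 p.2.2) - Real.sqrt (q p.1 p.2.1 p.2.2)|)
    simp only [sq_abs] at this
    refine le_trans (le_of_eq ?_) this
    congr 1
    refine Finset.sum_congr rfl fun p _ => ?_
    have hab : ∀ u v : ℝ, 0 ≤ u → u * |v| = |u * v| := fun u v hu => by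
      rw [abs_mul, abs_of_nonneg hu]
    rw [hab _ _ (add_nonneg (Real.sqrt_nonneg _) (Real.sqrt_nonneg _))]
    congr 1
    have := Real.sq_sqrt (hN p.1 p.2.1 p.2.2)
    have := Real.sq_sqrt (hq0 p.1 p.2.1 p.2.2)
    nlinarith
  have hD0 : 0 ≤ ∑ c, ∑ y, ∑ a, (Real.sqrt (N c y a) - Real.sqrt (q c y a)) ^ 2 :=
    Finset.sum_nonneg fun _ _ => Finset.sum_nonneg fun _ _ => Finset.sum_nonneg fun _ _ =>
      sq_nonneg _
  refine hCS.trans ?_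
  nlinarith

/-! ### Conditional laws -/

lemma sum_pr_fiber {Λ ζ : Type*} [Fintype Λ] [Fintype ζ] (P : Λ → ℝ) (Z : Λ → ζ)
    (E : Λ → Prop) : ∑ z, pr P (fun s => Z s = z ∧ E s) = pr P E := by
  unfold pr
  rw [Finset.sum_comm]
  refine Finset.sum_congr rfl fun s _ => ?_
  by_cases h : E s <;> simp [h]

lemma pr_nonneg {Λ : Type*} [Fintype Λ] {P : Λ → ℝ} (hP : ∀ s, 0 ≤ P s) (E : Λ → Prop) :
    0 ≤ pr P E :=
  Finset.sum_nonneg fun s _ => by split_ifs; exacts [hP s, le_rfl]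

/-- The joint law of the random variables `(c, y, a)` conditioned on the event `W`, as a function
of the values `(c₀, y₀, a₀)`. -/
def condLaw {Λ C Y A : Type*} [Fintype Λ] (P : Λ → ℝ) (W : Λ → Prop) (c : Λ → C)
    (y : Λ → Y) (a : Λ → A) (c₀ : C) (y₀ : Y) (a₀ : A) : ℝ :=
  pr P (fun s => a s = a₀ ∧ y s = y₀ ∧ c s = c₀ ∧ W s) / pr P W

section condLaw

set_option linter.unusedSectionVars false

variable {Λ C Y A : Type*} [Fintype Λ] [Fintype C] [Fintype Y] [Fintype A]
  (P : Λ → ℝ) (W : Λ → Prop) (c : Λ → C) (y : Λ → Y) (a : Λ → A)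

lemma condLaw_nonneg (hP : ∀ s, 0 ≤ P s) (c₀ : C) (y₀ : Y) (a₀ : A) :
    0 ≤ condLaw P W c y a c₀ y₀ a₀ :=
  div_nonneg (pr_nonneg hP _) (pr_nonneg hP _)

lemma condLaw_sum_a (c₀ : C) (y₀ : Y) :
    ∑ a₀, condLaw P W c y a c₀ y₀ a₀ = pr P (fun s => y s = y₀ ∧ c s = c₀ ∧ W s) / pr P W := by
  unfold condLaw
  rw [← Finset.sum_div, sum_pr_fiber]

lemma condLaw_sum_y (c₀ : C) (a₀ : A) :
    ∑ y₀, condLaw P W c y a c₀ y₀ a₀ = pr P (fun s => a s = a₀ ∧ c s = c₀ ∧ W s) / pr P W := by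
  unfold condLaw
  rw [← Finset.sum_div, ← sum_pr_fiber P y (fun s => a s = a₀ ∧ c s = c₀ ∧ W s)]
  congr 1
  refine Finset.sum_congr rfl fun v _ => congrArg (pr P) ?_
  funext s
  exact propext and_left_comm

lemma condLaw_sum_ya (c₀ : C) :
    ∑ y₀, ∑ a₀, condLaw P W c y a c₀ y₀ a₀ = pr P (fun s => c s = c₀ ∧ W s) / pr P W := by
  simp only [condLaw_sum_a]
  rw [← Finset.sum_div, sum_pr_fiber]

lemma condLaw_sum (hW : 0 < pr P W) :
    ∑ c₀, ∑ y₀, ∑ a₀, condLaw P W c y a c₀ y₀ a₀ = 1 := by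
  simp only [condLaw_sum_ya]
  rw [← Finset.sum_div, sum_pr_fiber, div_self hW.ne']

lemma condLaw_expect (f : C → Y → A → ℝ) :
    ∑ c₀, ∑ y₀, ∑ a₀, condLaw P W c y a c₀ y₀ a₀ * f c₀ y₀ a₀ =
      ∑ s, (if W s then P s / pr P W else 0) * f (c s) (y s) (a s) := by
  have h : ∀ c₀ y₀ a₀, condLaw P W c y a c₀ y₀ a₀ * f c₀ y₀ a₀ =
      ∑ s, if a s = a₀ then (if y s = y₀ then (if c s = c₀ then
        (if W s then P s / pr P W else 0) * f (c s) (y s) (a s) else 0) else 0) else 0 := by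
    intro c₀ y₀ a₀
    unfold condLaw
    conv_lhs => rw [pr]
    rw [Finset.sum_div, Finset.sum_mul]
    refine Finset.sum_congr rfl fun s _ => ?_
    by_cases h1 : a s = a₀ <;> by_cases h2 : y s = y₀ <;> by_cases h3 : c s = c₀ <;>
      by_cases h4 : W s <;> simp [h1, h2, h3, h4]
  simp only [h]
  have h2 : ∀ c₀ y₀, (∑ a₀, ∑ s, if a s = a₀ then (if y s = y₀ then (if c s = c₀ then
        (if W s then P s / pr P W else 0) * f (c s) (y s) (a s) else 0) else 0) else 0) =
      ∑ s, if y s = y₀ then (if c s = c₀ then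
        (if W s then P s / pr P W else 0) * f (c s) (y s) (a s) else 0) else 0 := by
    intro c₀ y₀
    rw [Finset.sum_comm]
    simp only [Finset.sum_ite_eq, Finset.mem_univ, if_true]
  simp only [h2]
  have h3 : ∀ c₀, (∑ y₀, ∑ s, if y s = y₀ then (if c s = c₀ then
        (if W s then P s / pr P W else 0) * f (c s) (y s) (a s) else 0) else 0) =
      ∑ s, if c s = c₀ then
        (if W s then P s / pr P W else 0) * f (c s) (y s) (a s) else 0 := by
    intro c₀
    rw [Finset.sum_comm]
    simp only [Finset.sum_ite_eq, Finset.mem_univ, if_true]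
  simp only [h3]
  rw [Finset.sum_comm]
  simp only [Finset.sum_ite_eq, Finset.mem_univ, if_true]

lemma condLaw_pos (hP : ∀ s, 0 ≤ P s) (hW : 0 < pr P W) (s : Λ) (hs : W s) (hPs : 0 < P s) :
    0 < condLaw P W c y a (c s) (y s) (a s) := by
  refine div_pos (lt_of_lt_of_le hPs ?_) hW
  have := Finset.single_le_sum (f := fun t => if a t = a s ∧ y t = y s ∧ c t = c s ∧ W t
    then P t else 0) (fun t _ => by split_ifs; exacts [hP t, le_rfl]) (Finset.mem_univ s)
  simp only [hs, and_self, if_true] at this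
  unfold pr
  convert this

end condLaw

/-- The likelihood ratio `N(y | c, a) / κ(y | c)` of a joint law `N` against a kernel `κ`; it is `0`
where a denominator vanishes. -/
def ratio {C Y A : Type*} [Fintype Y] (N : C → Y → A → ℝ) (κ : C → Y → ℝ)
    (c : C) (y : Y) (a : A) : ℝ :=
  N c y a / ((∑ y', N c y' a) * κ c y)

/-- `core_ineq` with the context `c = (x, r)`, expressed through conditional distributions and total
variation distance. -/
lemma expected_tv_sq_le {Λ X Y R A : Type*} [Fintype Λ] [Fintype X] [Fintype Y] [Fintype R]
    [Fintype A] (P : Λ → ℝ) (hP : ∀ s, 0 ≤ P s) (W : Λ → Prop) (hW : 0 < pr P W)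
    (x : Λ → X) (y : Λ → Y) (r : Λ → R) (a : Λ → A)
    (κ : X × R → Y → ℝ) (hκ0 : ∀ c v, 0 ≤ κ c v) (hκ1 : ∀ c, ∑ v, κ c v ≤ 1)
    (hκ : ∀ c v u, 0 < condLaw P W (fun s => (x s, r s)) y a c v u → 0 < κ c v) :
    (∑ p : (X × Y) × R,
        condDist P (fun s => ((x s, y s), r s)) W p *
          tvDist (condDist P a (fun s => r s = p.2 ∧ x s = p.1.1 ∧ y s = p.1.2 ∧ W s))
            (condDist P a (fun s => r s = p.2 ∧ x s = p.1.1 ∧ W s))) ^ 2 ≤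
      ∑ s, (if W s then P s / pr P W else 0) *
        Real.log (ratio (condLaw P W (fun s => (x s, r s)) y a) κ (x s, r s) (y s) (a s)) := by
  set N := condLaw P W (fun s => (x s, r s)) y a with hN
  have hN0 : ∀ c v u, 0 ≤ N c v u := condLaw_nonneg P W _ y a hP
  have main := core_ineq N hN0 (condLaw_sum P W _ y a hW) κ hκ0 hκ1 hκ
  have hE := condLaw_expect P W (fun s => (x s, r s)) y a
    (fun c v u => Real.log (ratio N κ c v u))
  have hL : ∑ p : (X × Y) × R,
        condDist P (fun s => ((x s, y s), r s)) W p *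
          tvDist (condDist P a (fun s => r s = p.2 ∧ x s = p.1.1 ∧ y s = p.1.2 ∧ W s))
            (condDist P a (fun s => r s = p.2 ∧ x s = p.1.1 ∧ W s)) =
      (∑ c, ∑ v, ∑ u, |N c v u - (∑ u', N c v u') *
        ((∑ v', N c v' u) / ∑ v', ∑ u', N c v' u')|) / 2 := by
    have hre : ∀ f : (X × Y) × R → ℝ, ∑ p, f p = ∑ c : X × R, ∑ v, f ((c.1, v), c.2) := by
      intro f
      simp only [Fintype.sum_prod_type]
      exact Finset.sum_congr rfl fun _ _ => Finset.sum_comm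
    rw [hre, Finset.sum_div]
    refine Finset.sum_congr rfl fun c _ => ?_
    rw [Finset.sum_div]
    refine Finset.sum_congr rfl fun v _ => ?_
    unfold tvDist
    rw [← mul_div_assoc, Finset.mul_sum]
    congr 1
    refine Finset.sum_congr rfl fun u _ => ?_
    have d1 : condDist P (fun s => ((x s, y s), r s)) W ((c.1, v), c.2) = ∑ u', N c v u' := by
      rw [hN, condLaw_sum_a]
      unfold condDist
      congr 2
      funext s
      apply propext
      simp only [Prod.ext_iff]
      tauto
    have d0 : 0 ≤ condDist P (fun s => ((x s, y s), r s)) W ((c.1, v), c.2) := by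
      rw [d1]; exact Finset.sum_nonneg fun _ _ => hN0 _ _ _
    have d2 : condDist P a (fun s => r s = c.2 ∧ x s = c.1 ∧ y s = v ∧ W s) u =
        N c v u / ∑ u', N c v u' := by
      rw [hN, condLaw_sum_a, condLaw, div_div_div_cancel_right₀ hW.ne', condDist]
      congr 2 <;>
      · funext s
        apply propext
        simp only [Prod.ext_iff]
        tauto
    have d3 : condDist P a (fun s => r s = c.2 ∧ x s = c.1 ∧ W s) u =
        (∑ v', N c v' u) / ∑ v', ∑ u', N c v' u' := by
      rw [hN, condLaw_sum_y, condLaw_sum_ya, div_div_div_cancel_right₀ hW.ne', condDist]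
      congr 2 <;>
      · funext s
        apply propext
        simp only [Prod.ext_iff]
        tauto
    simp only at d2 d3 ⊢
    rw [d1] at d0 ⊢
    have hab : ∀ u v : ℝ, 0 ≤ u → u * |v| = |u * v| := fun u v hu => by
      rw [abs_mul, abs_of_nonneg hu]
    rw [d2, d3, hab _ _ d0, mul_sub]
    congr 2
    rcases eq_or_ne (∑ u', N c v u') 0 with h | h
    · have := (Finset.sum_eq_zero_iff_of_nonneg (fun u' _ => hN0 c v u')).1 h u (Finset.mem_univ _)
      rw [h, this, zero_mul]
    · rw [mul_div_cancel₀ _ h]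
  rw [hL, ← hE, div_pow]
  unfold ratio
  linarith

/-! ### The moment bound for repeated games -/

section game

set_option linter.unusedSectionVars false

variable {𝒳 𝒴 𝒜 ℬ : Type*} [Fintype 𝒳] [Fintype 𝒴] [Fintype 𝒜] [Fintype ℬ] {n : ℕ}

/-- `R_{Tj}` as a function of `(x, y, a, d)` and of `b_S` only. -/
def rMk (S T : Finset (Fin n)) (j : Fin n) (x : Fin n → 𝒳) (y : Fin n → 𝒴) (a : Fin n → 𝒜)
    (d : Fin n → Bool) (b : {i // i ∈ S} → ℬ) : RType 𝒳 𝒴 𝒜 ℬ S T j :=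
  ((fun i => if d i.1 then Sum.inl (x i.1) else Sum.inr (y i.1),
    fun i => x i.1, fun i => y i.1), fun i => x i.1, fun i => a i.1, b)

/-- `R_{Tj}` sees `y_i` only where Bob's question is revealed: when `d_i = Bob` or `i ∈ S`. -/
lemma rMk_congr (S T : Finset (Fin n)) (j : Fin n) (x : Fin n → 𝒳) (y y' : Fin n → 𝒴)
    (a : Fin n → 𝒜) (d : Fin n → Bool) (b : {i // i ∈ S} → ℬ)
    (hd : ∀ i, d i = false → y i = y' i) (hS : ∀ i ∈ S, y i = y' i) :
    rMk S T j x y a d b = rMk S T j x y' a d b := by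
  unfold rMk
  have h1 : (fun i : {i : Fin n // i ≠ j} =>
      if d i.1 then (Sum.inl (x i.1) : 𝒳 ⊕ 𝒴) else Sum.inr (y i.1)) =
      fun i => if d i.1 then Sum.inl (x i.1) else Sum.inr (y' i.1) := by
    funext i
    by_cases h : d i.1 = true
    · simp [h]
    · simp [h, hd i.1 (by simpa using h)]
  have h2 : (fun i : {i : Fin n // i ∈ S} => y i.1) = fun i => y' i.1 := by
    funext i; exact hS _ i.2
  rw [h1, h2]

/-- Summing out Bob's questions for fixed `x, a, d, b_S`. -/
lemma sum_y_le (μ : 𝒳 × 𝒴 → ℝ) (hμ0 : ∀ p, 0 ≤ μ p) (S T J : Finset (Fin n))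
    (hJ : Disjoint J S)
    (Φ : ∀ j : Fin n, 𝒳 × RType 𝒳 𝒴 𝒜 ℬ S T j → 𝒴 → 𝒜 → ℝ) (hΦ0 : ∀ j c v u, 0 ≤ Φ j c v u)
    (hΦ : ∀ j c u, ∑ v, μ (c.1, v) * Φ j c v u ≤ ∑ v, μ (c.1, v))
    (x : Fin n → 𝒳) (a : Fin n → 𝒜) (d : Fin n → Bool) (b : {i // i ∈ S} → ℬ) :
    ∑ y : Fin n → 𝒴, (∏ i, μ (x i, y i)) *
        ∏ j ∈ J, (if d j then Φ j (x j, rMk S T j x y a d b) (y j) (a j) else 1) ≤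
      ∏ i, ∑ v, μ (x i, v) := by
  have := sum_pi_prod_le (Y := 𝒴) (fun j => j ∈ J ∧ d j = true)
    (fun j y v => μ (x j, v) *
      if j ∈ J ∧ d j = true then Φ j (x j, rMk S T j x y a d b) v (a j) else 1)
    (fun j y v => mul_nonneg (hμ0 _) (by split_ifs; exacts [hΦ0 _ _ _ _, zero_le_one]))
    (fun i => ∑ v, μ (x i, v)) (fun i => Finset.sum_nonneg fun _ _ => hμ0 _)
    (by
      intro j y
      by_cases h : j ∈ J ∧ d j = true
      · simpa only [h, and_self, if_true] using hΦ j (x j, rMk S T j x y a d b) (a j)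
      · simp only [h, if_false, mul_one, le_refl])
    (by
      intro j y y' h
      have : rMk (ℬ := ℬ) S T j x y a d b = rMk S T j x y' a d b := by
        refine rMk_congr S T j x y y' a d b (fun i hi => h i (by simp [hi])) fun i hi => h i ?_
        exact fun h' => Finset.disjoint_left.1 hJ h'.1 hi
      simp only [this])
    (by
      intro j h y y'
      simp only [h, if_false])
  refine le_trans (le_of_eq (Finset.sum_congr rfl fun y _ => ?_)) this
  rw [Finset.prod_mul_distrib]
  congr 1
  rw [← Finset.prod_subset (Finset.subset_univ J)]
  · exact Finset.prod_congr rfl fun j hj => by simp [hj]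
  · intro j _ hj
    simp [hj]

/-- If each `Φ j` has conditional mean at most one over `y ∼ μ(· | x)`, the product of the `Φ j` over
the coordinates `j ∈ J` with `D_j = Alice` has expectation at most `|ℬ|^|S|`; the loss comes from
treating `b_S` by a union bound. -/
lemma moment_bound (μ : 𝒳 × 𝒴 → ℝ) (hμ0 : ∀ p, 0 ≤ μ p) (hμ1 : ∑ p, μ p = 1)
    (q : (Fin n → 𝒳) → (Fin n → 𝒴) → (Fin n → 𝒜) × (Fin n → ℬ) → ℝ)
    (hq0 : ∀ x y ab, 0 ≤ q x y ab) (hq1 : ∀ x y, ∑ ab, q x y ab = 1)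
    (hNSA : ∀ x y y' a, (∑ b, q x y (a, b)) = ∑ b, q x y' (a, b))
    (S T J : Finset (Fin n)) (hJ : Disjoint J S)
    (Φ : ∀ j : Fin n, 𝒳 × RType 𝒳 𝒴 𝒜 ℬ S T j → 𝒴 → 𝒜 → ℝ) (hΦ0 : ∀ j c v u, 0 ≤ Φ j c v u)
    (hΦ : ∀ j c u, ∑ v, μ (c.1, v) * Φ j c v u ≤ ∑ v, μ (c.1, v)) :
    ∑ s : Sample 𝒳 𝒴 𝒜 ℬ n, jointP μ q s *
        ∏ j ∈ J, (if s.d j then Φ j (s.x j, rRV S T j s) (s.y j) (s.a j) else 1) ≤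
      (Fintype.card ℬ : ℝ) ^ S.card := by
  obtain ⟨y0⟩ : Nonempty (Fin n → 𝒴) := by
    by_contra h
    have h𝒴 : IsEmpty 𝒴 := ⟨fun v => h ⟨fun _ => v⟩⟩
    simp at hμ1
  set G : (Fin n → 𝒳) → (Fin n → 𝒴) → (Fin n → 𝒜) → (Fin n → Bool) → ({i // i ∈ S} → ℬ) → ℝ :=
    fun x y a d b =>
      ∏ j ∈ J, (if d j then Φ j (x j, rMk S T j x y a d b) (y j) (a j) else 1) with hG
  have hG0 : ∀ x y a d b, 0 ≤ G x y a d b := fun x y a d b =>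
    Finset.prod_nonneg fun j _ => by split_ifs; exacts [hΦ0 _ _ _ _, zero_le_one]
  have hμp : ∀ (x : Fin n → 𝒳) (y : Fin n → 𝒴), 0 ≤ ∏ i, μ (x i, y i) := fun x y =>
    Finset.prod_nonneg fun i _ => hμ0 _
  -- the union bound over the value of `b_S`; no-signaling makes Alice's marginal independent of `y`
  have hb : ∀ x y a d, ∑ b : Fin n → ℬ, q x y (a, b) * G x y a d (fun i => b i.1) ≤
      (∑ b, q x y0 (a, b)) * ∑ b', G x y a d b' := by
    intro x y a d
    rw [hNSA x y0 y a, Finset.sum_mul]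
    refine Finset.sum_le_sum fun b _ => mul_le_mul_of_nonneg_left ?_ (hq0 _ _ _)
    exact Finset.single_le_sum (f := fun b' => G x y a d b') (fun _ _ => hG0 _ _ _ _ _)
      (Finset.mem_univ _)
  calc ∑ s : Sample 𝒳 𝒴 𝒜 ℬ n, jointP μ q s *
        ∏ j ∈ J, (if s.d j then Φ j (s.x j, rRV S T j s) (s.y j) (s.a j) else 1)
      = ∑ x, ∑ y, ∑ a, ∑ b, ∑ d, (∏ i, μ (x i, y i)) * q x y (a, b) * (1 / 2) ^ n *
          G x y a d (fun i => b i.1) := by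
        simp only [Fintype.sum_prod_type]
        rfl
    _ = ∑ x, ∑ a, ∑ d, (1 / 2) ^ n * ∑ y, (∏ i, μ (x i, y i)) *
          ∑ b, q x y (a, b) * G x y a d (fun i => b i.1) := by
        refine Finset.sum_congr rfl fun x _ => ?_
        rw [Finset.sum_comm]
        refine Finset.sum_congr rfl fun a _ => ?_
        simp only [Finset.mul_sum]
        conv_rhs => rw [Finset.sum_comm]
        refine Finset.sum_congr rfl fun y _ => ?_
        rw [Finset.sum_comm]
        refine Finset.sum_congr rfl fun d _ => Finset.sum_congr rfl fun b _ => ?_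
        ring
    _ ≤ ∑ x, ∑ a, ∑ d : Fin n → Bool, (1 / 2) ^ n * ∑ y, (∏ i, μ (x i, y i)) *
          ((∑ b, q x y0 (a, b)) * ∑ b', G x y a d b') := by
        gcongr with x _ a _ d _ y _
        · exact hμp x y
        · exact hb x y a d
    _ = ∑ x, ∑ a, ∑ d : Fin n → Bool, (1 / 2) ^ n * ((∑ b, q x y0 (a, b)) *
          ∑ b', ∑ y, (∏ i, μ (x i, y i)) * G x y a d b') := by
        refine Finset.sum_congr rfl fun x _ => Finset.sum_congr rfl fun a _ =>
          Finset.sum_congr rfl fun d _ => ?_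
        conv_rhs => rw [Finset.sum_comm, Finset.mul_sum]
        congr 1
        refine Finset.sum_congr rfl fun y _ => ?_
        rw [← Finset.mul_sum]
        ring
    _ ≤ ∑ x : Fin n → 𝒳, ∑ a, ∑ d : Fin n → Bool, (1 / 2) ^ n * ((∑ b, q x y0 (a, b)) *
          ∑ b' : {i // i ∈ S} → ℬ, ∏ i, ∑ v, μ (x i, v)) := by
        gcongr with x _ a _ d _ b' _
        · exact Finset.sum_nonneg fun b _ => hq0 _ _ _
        · exact sum_y_le μ hμ0 S T J hJ Φ hΦ0 hΦ x a d b'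
    _ = (Fintype.card ℬ : ℝ) ^ S.card := by
        have e1 : ∀ x, ∑ a, ∑ b, q x y0 (a, b) = 1 := fun x => by
          rw [← hq1 x y0, Fintype.sum_prod_type]
        have e2 : ∑ x : Fin n → 𝒳, ∏ i, ∑ v, μ (x i, v) = 1 := by
          rw [← Fintype.piFinset_univ,
            Finset.sum_prod_piFinset Finset.univ (fun (_ : Fin n) u => ∑ v, μ (u, v)),
            ← Fintype.sum_prod_type, hμ1, Finset.prod_const_one]
        simp only [Finset.sum_const, Finset.card_univ, Fintype.card_fun, Fintype.card_bool,
          Fintype.card_fin, nsmul_eq_mul, Fintype.card_coe]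
        have e3 : ((2 ^ n : ℕ) : ℝ) * (1 / 2) ^ n = 1 := by
          push_cast; rw [← mul_pow]; norm_num
        simp only [← mul_assoc, e3, one_mul]
        simp only [← Finset.sum_mul, e1, one_mul]
        rw [← Finset.mul_sum, e2]
        simp

/-- A function not depending on the coin `D_j` has half its mean on `D_j = Alice`, by the symmetry
flipping that coin. -/
lemma two_mul_sum_coin (Q f : Sample 𝒳 𝒴 𝒜 ℬ n → ℝ) (j : Fin n)
    (hQ : ∀ x y a b d d', Q (x, y, a, b, d) = Q (x, y, a, b, d'))
    (hf : ∀ x y a b d d', (∀ i, i ≠ j → d i = d' i) → f (x, y, a, b, d) = f (x, y, a, b, d')) :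
    ∑ s, Q s * f s = 2 * ∑ s, Q s * (if s.d j then f s else 0) := by
  let flip : Sample 𝒳 𝒴 𝒜 ℬ n → Sample 𝒳 𝒴 𝒜 ℬ n := fun s =>
    (s.1, s.2.1, s.2.2.1, s.2.2.2.1, Function.update s.2.2.2.2 j (!s.2.2.2.2 j))
  have hflip : Function.Involutive flip := by
    rintro ⟨x, y, a, b, d⟩
    simp [flip]
  have h : ∑ s, Q s * (if s.d j then f s else 0) = ∑ s, Q s * (if s.d j then 0 else f s) := by
    rw [← Equiv.sum_comp (Function.Involutive.toPerm flip hflip)]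
    refine Finset.sum_congr rfl ?_
    rintro ⟨x, y, a, b, d⟩ _
    have h1 := hQ x y a b (Function.update d j (!d j)) d
    have h2 := hf x y a b (Function.update d j (!d j)) d
      (fun i hi => by simp [Function.update_of_ne hi])
    simp only [Function.Involutive.coe_toPerm, flip, Sample.d, Function.update_self, h1, h2]
    by_cases hd : d j = true <;> simp [hd]
  rw [two_mul]
  nth_rewrite 2 [h]
  rw [← Finset.sum_add_distrib]
  refine Finset.sum_congr rfl fun s _ => ?_
  split_ifs <;> ring

end game

/-! ### Conclusion -/

/-- The paper's Lemma 3.5 (Alice's answer does not depend on Bob's question): with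
`W = W_S^{≥1-τ}`, `m = n - |S|` and
`δ' = (1/((1-β)m))·(log₂(1/P(W)) + (2|S| + βm)·log₂|𝒜 × ℬ|)`, for every `T ⊆ [n]∖S` with
`|T| ≤ βm`, on average over a uniform `j ∈ [n]∖(T∪S)` and over
`(x_j, y_j, r_{Tj}) ∼ P_{X_j Y_j R_{Tj} | W}`, the conditional law of `A_j` given
`(r_{Tj}, x_j, y_j, W)` is `√(2δ')`-close in total variation to its law given
`(r_{Tj}, x_j, W)`. -/
theorem alice_answer_independent_of_bob_question
    {𝒳 𝒴 𝒜 ℬ : Type*} [Fintype 𝒳] [Fintype 𝒴] [Fintype 𝒜] [Fintype ℬ] {n : ℕ}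
    (μ : 𝒳 × 𝒴 → ℝ) (hμ0 : ∀ p, 0 ≤ μ p) (hμ1 : ∑ p, μ p = 1)
    (q : (Fin n → 𝒳) → (Fin n → 𝒴) → (Fin n → 𝒜) × (Fin n → ℬ) → ℝ)
    (hq0 : ∀ x y ab, 0 ≤ q x y ab) (hq1 : ∀ x y, ∑ ab, q x y ab = 1)
    (hNSA : ∀ x y y' a, (∑ b, q x y (a, b)) = ∑ b, q x y' (a, b))
    (hNSB : ∀ x x' y b, (∑ a, q x y (a, b)) = ∑ a, q x' y (a, b))
    (V : 𝒳 → 𝒴 → 𝒜 → ℬ → Prop)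
    (S : Finset (Fin n)) (τ : ℝ) (hτ0 : 0 ≤ τ) (hτ1 : τ ≤ 1)
    (hW : 0 < pr (jointP μ q) (winS V S τ))
    (β : ℝ) (hβ0 : 0 < β) (hβ1 : β < 1)
    (T : Finset (Fin n)) (hTS : Disjoint T S)
    (hT : (T.card : ℝ) ≤ β * ((n - S.card : ℕ) : ℝ)) :
    (∑ j ∈ Finset.univ \ (T ∪ S),
        ∑ p : (𝒳 × 𝒴) × RType 𝒳 𝒴 𝒜 ℬ S T j,
          condDist (jointP μ q) (fun s => ((s.x j, s.y j), rRV S T j s)) (winS V S τ) p *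
            tvDist
              (condDist (jointP μ q) (fun s => s.a j)
                (fun s => rRV S T j s = p.2 ∧ s.x j = p.1.1 ∧ s.y j = p.1.2 ∧ winS V S τ s))
              (condDist (jointP μ q) (fun s => s.a j)
                (fun s => rRV S T j s = p.2 ∧ s.x j = p.1.1 ∧ winS V S τ s)))
      / ((Finset.univ \ (T ∪ S)).card : ℝ)
    ≤ Real.sqrt (2 * ((1 / ((1 - β) * ((n - S.card : ℕ) : ℝ))) *
        (Real.logb 2 (1 / pr (jointP μ q) (winS V S τ)) +
          (2 * (S.card : ℝ) + β * ((n - S.card : ℕ) : ℝ)) *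
            Real.logb 2 (Fintype.card (𝒜 × ℬ) : ℝ)))) := by
  set P := jointP (𝒳 := 𝒳) (𝒴 := 𝒴) (𝒜 := 𝒜) (ℬ := ℬ) μ q with hPdef
  set W := winS V S τ with hWdef
  set J := Finset.univ \ (T ∪ S) with hJdef
  set w := pr P W with hw
  have hP0 : ∀ s, 0 ≤ P s := fun s => mul_nonneg
    (mul_nonneg (Finset.prod_nonneg fun _ _ => hμ0 _) (hq0 _ _ _)) (by positivity)
  rcases J.eq_empty_or_nonempty with hJe | hJne
  · rw [hJe]
    simp only [Finset.sum_empty, zero_div]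
    exact Real.sqrt_nonneg _
  have hJS : Disjoint J S := by
    rw [Finset.disjoint_left]
    intro i hi hS
    simp [hJdef, hS] at hi
  have hw1 : w ≤ 1 := by
    have h := moment_bound μ hμ0 hμ1 q hq0 hq1 hNSA ∅ ∅ ∅ (by simp) (fun _ _ _ _ => 1)
      (fun _ _ _ _ => zero_le_one) (by simp)
    simp only [Finset.prod_empty, mul_one, Finset.card_empty, pow_zero] at h
    refine le_trans (Finset.sum_le_sum fun s _ => ?_) h
    split_ifs
    exacts [le_rfl, hP0 s]
  obtain ⟨s₀, hs₀W, hs₀⟩ : ∃ s, W s ∧ 0 < P s := by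
    by_contra! h
    refine absurd hW (not_lt.2 (Finset.sum_nonpos fun s _ => ?_))
    split_ifs with hs
    exacts [h s hs, le_rfl]
  obtain ⟨j₀, hj₀⟩ := hJne
  have hA : 1 ≤ Fintype.card 𝒜 := Fintype.card_pos_iff.2 ⟨s₀.a j₀⟩
  have hB : 1 ≤ Fintype.card ℬ := Fintype.card_pos_iff.2 ⟨s₀.b j₀⟩
  -- `κ(y | x) = μ(x, y) / μ(x)`
  let κ : 𝒳 → 𝒴 → ℝ := fun x v => μ (x, v) / ∑ v', μ (x, v')
  have hκ0 : ∀ x v, 0 ≤ κ x v := fun x v =>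
    div_nonneg (hμ0 _) (Finset.sum_nonneg fun _ _ => hμ0 _)
  have hκ1 : ∀ x, ∑ v, κ x v ≤ 1 := fun x => by
    simp only [κ]
    rw [← Finset.sum_div]
    exact div_self_le_one _
  let N : ∀ j : Fin n, 𝒳 × RType 𝒳 𝒴 𝒜 ℬ S T j → 𝒴 → 𝒜 → ℝ := fun j =>
    condLaw P W (fun s => (s.x j, rRV S T j s)) (fun s => s.y j) (fun s => s.a j)
  have hN0 : ∀ j c v u, 0 ≤ N j c v u := fun j => condLaw_nonneg P W _ _ _ hP0
  have hμpos : ∀ s : Sample 𝒳 𝒴 𝒜 ℬ n, 0 < P s → ∀ j, 0 < μ (s.x j, s.y j) := by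
    intro s hs j
    refine lt_of_le_of_ne (hμ0 _) fun h => hs.ne' ?_
    simp only [hPdef, jointP]
    rw [Finset.prod_eq_zero (Finset.mem_univ j) h.symm, zero_mul, zero_mul]
  have hκpos : ∀ x v, 0 < μ (x, v) → 0 < κ x v := fun x v h => div_pos h <| h.trans_le <|
    Finset.single_le_sum (f := fun v => μ (x, v)) (fun _ _ => hμ0 _) (Finset.mem_univ v)
  have hNκ : ∀ j c v u, 0 < N j c v u → 0 < κ c.1 v := by
    intro j c v u h
    by_contra hk
    refine h.ne' ?_
    simp only [N, condLaw, pr]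
    rw [div_eq_zero_iff]
    refine Or.inl (Finset.sum_eq_zero fun s _ => ?_)
    split_ifs with hs
    · obtain ⟨-, rfl, rfl, -⟩ := hs
      by_contra hne
      exact hk (hκpos _ _ (hμpos s (lt_of_le_of_ne (hP0 s) (Ne.symm hne)) j))
    · rfl
  let Φ : ∀ j : Fin n, 𝒳 × RType 𝒳 𝒴 𝒜 ℬ S T j → 𝒴 → 𝒜 → ℝ := fun j =>
    ratio (N j) (fun c => κ c.1)
  have hΦ0 : ∀ j c v u, 0 ≤ Φ j c v u := fun j c v u =>
    div_nonneg (hN0 _ _ _ _) (mul_nonneg (Finset.sum_nonneg fun _ _ => hN0 _ _ _ _) (hκ0 _ _))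
  have hΦ : ∀ j c u, ∑ v, μ (c.1, v) * Φ j c v u ≤ ∑ v, μ (c.1, v) := by
    intro j c u
    have hX : 0 ≤ ∑ v, μ (c.1, v) := Finset.sum_nonneg fun _ _ => hμ0 _
    have hM : 0 ≤ ∑ v, N j c v u := Finset.sum_nonneg fun _ _ => hN0 _ _ _ _
    calc ∑ v, μ (c.1, v) * Φ j c v u
        ≤ ∑ v, (∑ v', μ (c.1, v')) * (N j c v u / ∑ v', N j c v' u) := by
          refine Finset.sum_le_sum fun v _ => ?_
          rcases (hμ0 (c.1, v)).eq_or_lt with h | h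
          · rw [← h, zero_mul]
            exact mul_nonneg hX (div_nonneg (hN0 _ _ _ _) hM)
          · refine le_of_eq ?_
            have hXp : 0 < ∑ v, μ (c.1, v) := h.trans_le <|
              Finset.single_le_sum (f := fun v => μ (c.1, v)) (fun _ _ => hμ0 _)
                (Finset.mem_univ v)
            simp only [Φ, ratio, κ]
            field_simp
      _ = (∑ v', μ (c.1, v')) * ((∑ v, N j c v u) / ∑ v', N j c v' u) := by
          rw [← Finset.mul_sum, Finset.sum_div]
      _ ≤ _ := mul_le_of_le_one_right hX (div_self_le_one _)
  let Q : Sample 𝒳 𝒴 𝒜 ℬ n → ℝ := fun s => if W s then P s / w else 0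
  have hQ0 : ∀ s, 0 ≤ Q s := fun s => by
    simp only [Q]; split_ifs; exacts [div_nonneg (hP0 s) hW.le, le_rfl]
  have hQ1 : ∑ s, Q s = 1 := by
    rw [← div_self hW.ne']
    nth_rewrite 1 [hw]
    unfold pr
    rw [Finset.sum_div]
    refine Finset.sum_congr rfl fun s _ => ?_
    simp only [Q]
    split_ifs <;> simp
  let f : Fin n → Sample 𝒳 𝒴 𝒜 ℬ n → ℝ := fun j s => Φ j (s.x j, rRV S T j s) (s.y j) (s.a j)
  have hf0 : ∀ j s, 0 ≤ f j s := fun j s => hΦ0 _ _ _ _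
  have hfpos : ∀ s, 0 < Q s → ∀ j, 0 < f j s := by
    intro s hs j
    have hsW : W s := by
      by_contra h
      simp [Q, h] at hs
    have hsP : 0 < P s := by
      refine lt_of_le_of_ne (hP0 s) fun h => hs.ne' ?_
      simp [Q, ← h]
    have h1 : 0 < N j (s.x j, rRV S T j s) (s.y j) (s.a j) :=
      condLaw_pos P W (fun s => (s.x j, rRV S T j s)) (fun s => s.y j) (fun s => s.a j)
        hP0 hW s hsW hsP
    refine div_pos h1 (mul_pos (h1.trans_le ?_) (hNκ _ _ _ _ h1))
    exact Finset.single_le_sum (f := fun v => N j (s.x j, rRV S T j s) v (s.a j))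
      (fun _ _ => hN0 _ _ _ _) (Finset.mem_univ _)
  set K : ℝ := Real.log ((Fintype.card ℬ : ℝ) ^ S.card / w) with hK
  -- Jensen's inequality for `log`, in the form `log g ≤ log c + g / c - 1`
  have hent : ∑ j ∈ J, ∑ s, Q s * (if s.d j then Real.log (f j s) else 0) ≤ K := by
    set g : Sample 𝒳 𝒴 𝒜 ℬ n → ℝ := fun s => ∏ j ∈ J, (if s.d j then f j s else 1) with hg
    set c : ℝ := (Fintype.card ℬ : ℝ) ^ S.card / w with hc
    have hcpos : 0 < c := by
      have : (0 : ℝ) < Fintype.card ℬ := by exact_mod_cast hB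
      positivity
    have hg0 : ∀ s, 0 ≤ g s := fun s => Finset.prod_nonneg fun j _ => by
      split_ifs; exacts [hf0 j s, zero_le_one]
    have hQg : ∑ s, Q s * g s ≤ c := by
      have h := moment_bound μ hμ0 hμ1 q hq0 hq1 hNSA S T J hJS Φ hΦ0 hΦ
      rw [hc, le_div_iff₀ hW, Finset.sum_mul]
      refine le_trans (Finset.sum_le_sum fun s _ => ?_) h
      change Q s * g s * w ≤ P s * g s
      simp only [Q]
      split_ifs
      · rw [mul_right_comm, div_mul_cancel₀ _ hW.ne']
      · simpa using mul_nonneg (hP0 s) (hg0 s)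
    rw [Finset.sum_comm]
    calc ∑ s, ∑ j ∈ J, Q s * (if s.d j then Real.log (f j s) else 0)
        ≤ ∑ s, (Q s * K + (Q s * g s) / c - Q s) := by
          refine Finset.sum_le_sum fun s _ => ?_
          rcases (hQ0 s).eq_or_lt with h | h
          · simp [← h]
          have hgs : 0 < g s := Finset.prod_pos fun j _ => by
            split_ifs; exacts [hfpos s h j, zero_lt_one]
          have e : ∑ j ∈ J, (if s.d j then Real.log (f j s) else 0) = Real.log (g s) := by
            rw [hg, Real.log_prod]
            · refine Finset.sum_congr rfl fun j _ => ?_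
              split_ifs <;> simp
            · intro j _
              split_ifs; exacts [(hfpos s h j).ne', one_ne_zero]
          rw [← Finset.mul_sum, e]
          have l := Real.log_le_sub_one_of_pos (div_pos hgs hcpos)
          rw [Real.log_div hgs.ne' hcpos.ne'] at l
          have := mul_le_mul_of_nonneg_left l h.le
          rw [mul_div_assoc]
          linarith
      _ = K + (∑ s, Q s * g s) / c - 1 := by
          rw [Finset.sum_sub_distrib, Finset.sum_add_distrib, ← Finset.sum_mul, ← Finset.sum_div,
            hQ1, one_mul]
      _ ≤ K := by
          have := (div_le_one hcpos).2 hQg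
          linarith
  have hcoin : ∀ j, ∑ s, Q s * Real.log (f j s) =
      2 * ∑ s, Q s * (if s.d j then Real.log (f j s) else 0) := by
    intro j
    refine two_mul_sum_coin Q (fun s => Real.log (f j s)) j (fun _ _ _ _ _ _ => rfl) ?_
    intro x y a b d d' h
    have : rRV S T j (x, y, a, b, d) = rRV S T j (x, y, a, b, d') := by
      have hd : ∀ i : {i : Fin n // i ≠ j}, Sample.d (x, y, a, b, d) i.1 =
          Sample.d (x, y, a, b, d') i.1 := fun i => h i.1 i.2
      simp only [rRV, omegaMinusRV, hd]
      rfl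
    simp only [f, this]
    rfl
  let L : Fin n → ℝ := fun j => ∑ p : (𝒳 × 𝒴) × RType 𝒳 𝒴 𝒜 ℬ S T j,
          condDist P (fun s => ((s.x j, s.y j), rRV S T j s)) W p *
            tvDist
              (condDist P (fun s => s.a j)
                (fun s => rRV S T j s = p.2 ∧ s.x j = p.1.1 ∧ s.y j = p.1.2 ∧ W s))
              (condDist P (fun s => s.a j)
                (fun s => rRV S T j s = p.2 ∧ s.x j = p.1.1 ∧ W s))
  have hL : ∀ j, L j ^ 2 ≤ ∑ s, Q s * Real.log (f j s) := fun j =>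
    expected_tv_sq_le P hP0 W hW (fun s => s.x j) (fun s => s.y j) (rRV S T j) (fun s => s.a j)
      (fun c => κ c.1) (fun c => hκ0 c.1) (fun c => hκ1 c.1) (hNκ j)
  have hLsum : ∑ j ∈ J, L j ^ 2 ≤ 2 * K := by
    refine (Finset.sum_le_sum fun j _ => hL j).trans ?_
    simp only [hcoin]
    rw [← Finset.mul_sum]
    linarith
  have hJcard : (1 - β) * ((n - S.card : ℕ) : ℝ) ≤ (J.card : ℝ) := by
    have hle : S.card ≤ n := by simpa using Finset.card_le_univ S
    have e1 : J.card + (T.card + S.card) = n := by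
      rw [← Finset.card_union_of_disjoint hTS, hJdef]
      simpa using Finset.card_sdiff_add_card_eq_card (Finset.subset_univ (T ∪ S))
    have e2 : (J.card : ℝ) + T.card = ((n - S.card : ℕ) : ℝ) := by
      have : J.card + T.card = n - S.card := by omega
      exact_mod_cast this
    linarith
  have hM : (0 : ℝ) < J.card := by exact_mod_cast Finset.card_pos.2 ⟨j₀, hj₀⟩
  have hm : 0 < ((n - S.card : ℕ) : ℝ) := by
    have : (J.card : ℝ) ≤ ((n - S.card : ℕ) : ℝ) := by
      have h1 : J ⊆ Finset.univ \ S := fun i hi => by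
        simpa using Finset.disjoint_left.1 hJS hi
      have h2 := Finset.card_le_card h1
      rw [Finset.card_sdiff_of_subset (Finset.subset_univ S), Finset.card_univ,
        Fintype.card_fin] at h2
      exact_mod_cast h2
    linarith
  have hB1 : (1 : ℝ) ≤ Fintype.card ℬ := by exact_mod_cast hB
  have hA1 : (1 : ℝ) ≤ Fintype.card 𝒜 := by exact_mod_cast hA
  have hlogb : ∀ t : ℝ, 1 ≤ t → Real.log t ≤ Real.logb 2 t := fun t ht => by
    rw [Real.logb, le_div_iff₀ (Real.log_pos one_lt_two)]
    have := Real.log_two_lt_d9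
    exact mul_le_of_le_one_right (Real.log_nonneg ht) (by linarith)
  set D : ℝ := Real.logb 2 (1 / w) + (2 * (S.card : ℝ) + β * ((n - S.card : ℕ) : ℝ)) *
            Real.logb 2 (Fintype.card (𝒜 × ℬ) : ℝ) with hD
  have hAB1 : (1 : ℝ) ≤ Fintype.card (𝒜 × ℬ) := by
    rw [Fintype.card_prod]; push_cast; nlinarith
  have hlB : Real.log (Fintype.card ℬ) ≤ Real.logb 2 (Fintype.card (𝒜 × ℬ) : ℝ) := by
    refine le_trans ?_ (hlogb _ hAB1)
    apply Real.log_le_log (by linarith)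
    rw [Fintype.card_prod]; push_cast; nlinarith
  have hw1' : 1 ≤ 1 / w := (one_le_div hW).2 hw1
  have hKD : K ≤ D := by
    have e : K = S.card * Real.log (Fintype.card ℬ) + Real.log (1 / w) := by
      rw [hK, div_eq_mul_one_div, Real.log_mul (by positivity) (by positivity), Real.log_pow]
    have h1 := hlogb _ hw1'
    have hl0 : 0 ≤ Real.log (Fintype.card ℬ) := Real.log_nonneg hB1
    have h2 : (S.card : ℝ) * Real.log (Fintype.card ℬ) ≤
        (2 * (S.card : ℝ) + β * ((n - S.card : ℕ) : ℝ)) *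
          Real.logb 2 (Fintype.card (𝒜 × ℬ) : ℝ) := by
      refine mul_le_mul ?_ hlB hl0 (by positivity)
      have : 0 ≤ β * ((n - S.card : ℕ) : ℝ) := by positivity
      have : (0 : ℝ) ≤ S.card := by positivity
      linarith
    rw [e, hD]
    linarith
  have hK0 : 0 ≤ K := by
    have := Finset.sum_nonneg fun j (_ : j ∈ J) => sq_nonneg (L j)
    linarith
  change (∑ j ∈ J, L j) / (J.card : ℝ) ≤ _
  apply Real.le_sqrt_of_sq_le
  have hβm : 0 < (1 - β) * ((n - S.card : ℕ) : ℝ) := mul_pos (by linarith) hm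
  calc ((∑ j ∈ J, L j) / (J.card : ℝ)) ^ 2
      ≤ (J.card * ∑ j ∈ J, L j ^ 2) / (J.card : ℝ) ^ 2 := by
        rw [div_pow]
        gcongr
        exact sq_sum_le_card_mul_sum_sq
    _ = (∑ j ∈ J, L j ^ 2) / J.card := by
        field_simp
    _ ≤ (2 * D) / ((1 - β) * ((n - S.card : ℕ) : ℝ)) := by
        gcongr
        · linarith
        · linarith
    _ = 2 * (1 / ((1 - β) * ((n - S.card : ℕ) : ℝ)) * D) := by ring

end
end

section
/- In the augmented joint distribution P of (Ω, X, Y, A, B), the question tuples X and Y are conditionally independent given Ω: for every value ω of Ω with positive probability, P_{X Y | Ω = ω} = P_{X | Ω = ω} · P_{Y | Ω = ω}. -/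
/-!
Fix `ω`. The event `Ω = ω` determines every coin `D_i`, and given the coins it is the conjunction of
a condition on `x` alone (`AgreesX`) and one on `y` alone (`AgreesY`). On that event each factor
`μ (x_i, y_i)` has one of its two arguments pinned by `ω`: it is `μ (u, y_i)` when `ω_i = inl u` and
`μ (x_i, v)` when `ω_i = inr v`. Summing out the answers with `∑ q = 1`, the joint mass
`P (X = x, Y = y, Ω = ω)` is therefore a product `F x * G y` (`pr_questions_omega`), and a
joint mass of product form gives conditional independence (`condDist_pair_of_product`).
-/

open Finset
open scoped Classical

noncomputable section

variable {𝒳 𝒴 𝒜 ℬ : Type*} [Fintype 𝒳] [Fintype 𝒴] [Fintype 𝒜] [Fintype ℬ] {n : ℕ}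

/-- If the joint mass of `(X, Y)` on the event `E` is of product form, then `X` and `Y` are
conditionally independent given `E`. -/
lemma condDist_pair_of_product {Λ ζ₁ ζ₂ : Type*} [Fintype Λ] [Fintype ζ₁] [Fintype ζ₂]
    (P : Λ → ℝ) (X : Λ → ζ₁) (Y : Λ → ζ₂) (E : Λ → Prop) (hE : pr P E ≠ 0)
    (F : ζ₁ → ℝ) (G : ζ₂ → ℝ)
    (h : ∀ x y, pr P (fun s => (X s, Y s) = (x, y) ∧ E s) = F x * G y) (x : ζ₁) (y : ζ₂) :
    condDist P (fun s => (X s, Y s)) E (x, y) = condDist P X E x * condDist P Y E y := by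
  have hX : ∀ x, pr P (fun s => X s = x ∧ E s) = F x * ∑ y, G y := by
    intro x
    rw [Finset.mul_sum]
    simp only [← h, pr]
    rw [Finset.sum_comm]
    refine Finset.sum_congr rfl fun s _ => ?_
    by_cases h1 : X s = x <;> by_cases h2 : E s <;> simp [h1, h2]
  have hY : ∀ y, pr P (fun s => Y s = y ∧ E s) = (∑ x, F x) * G y := by
    intro y
    rw [Finset.sum_mul]
    simp only [← h, pr]
    rw [Finset.sum_comm]
    refine Finset.sum_congr rfl fun s _ => ?_
    by_cases h1 : Y s = y <;> by_cases h2 : E s <;> simp [h1, h2]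
  have hT : pr P E = (∑ x, F x) * ∑ y, G y := by
    rw [Finset.sum_mul]
    simp only [← hX, pr]
    rw [Finset.sum_comm]
    refine Finset.sum_congr rfl fun s _ => ?_
    by_cases h2 : E s <;> simp [h2]
  unfold condDist
  rw [h, hX, hY, div_mul_div_comm, div_eq_div_iff hE (mul_ne_zero hE hE), hT]
  ring

/-- The part of the event `Ω = ω` that constrains Alice's questions. -/
def AgreesX {S : Finset (Fin n)} (ω : OmegaType 𝒳 𝒴 S) (x : Fin n → 𝒳) : Prop :=
  (∀ i u, ω.1 i = Sum.inl u → x i = u) ∧ ∀ i : {i : Fin n // i ∈ S}, x i.1 = ω.2.1 i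

/-- The part of the event `Ω = ω` that constrains Bob's questions. -/
def AgreesY {S : Finset (Fin n)} (ω : OmegaType 𝒳 𝒴 S) (y : Fin n → 𝒴) : Prop :=
  (∀ i v, ω.1 i = Sum.inr v → y i = v) ∧ ∀ i : {i : Fin n // i ∈ S}, y i.1 = ω.2.2 i

lemma omegaRV_eq_iff {S : Finset (Fin n)} (ω : OmegaType 𝒳 𝒴 S) (x : Fin n → 𝒳)
    (y : Fin n → 𝒴) (a : Fin n → 𝒜) (b : Fin n → ℬ) (d : Fin n → Bool) :
    omegaRV S ((x, y, a, b, d) : Sample 𝒳 𝒴 𝒜 ℬ n) = ω ↔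
      d = (fun i => (ω.1 i).isLeft) ∧ AgreesX ω x ∧ AgreesY ω y := by
  obtain ⟨m, xs, ys⟩ := ω
  have key : (∀ i, (if d i then Sum.inl (x i) else Sum.inr (y i)) = m i) ↔
      (∀ i, d i = (m i).isLeft) ∧ (∀ i u, m i = Sum.inl u → x i = u) ∧
        ∀ i v, m i = Sum.inr v → y i = v := by
    rw [← forall_and, ← forall_and]
    refine forall_congr' fun i => ?_
    cases hd : d i <;> cases hm : m i <;> simp
  simp only [omegaRV, AgreesX, AgreesY, Prod.mk.injEq, funext_iff, Sample.x, Sample.y, Sample.d]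
  tauto

/-- The joint mass of the questions and `Ω = ω` factors into a function of `x` and a function
of `y`. -/
lemma pr_questions_omega (μ : 𝒳 × 𝒴 → ℝ)
    (q : (Fin n → 𝒳) → (Fin n → 𝒴) → (Fin n → 𝒜) × (Fin n → ℬ) → ℝ)
    (hq1 : ∀ x y, ∑ ab, q x y ab = 1) {S : Finset (Fin n)} (ω : OmegaType 𝒳 𝒴 S)
    (xv : Fin n → 𝒳) (yv : Fin n → 𝒴) :
    pr (jointP μ q) (fun s => (s.x, s.y) = (xv, yv) ∧ omegaRV S s = ω) =
      (if AgreesX ω xv then ∏ i, Sum.elim (fun _ => 1) (fun v => μ (xv i, v)) (ω.1 i) else 0) *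
      (if AgreesY ω yv then
        (∏ i, Sum.elim (fun u => μ (u, yv i)) (fun _ => 1) (ω.1 i)) * (1 / 2) ^ n else 0) := by
  have hsum : pr (jointP μ q) (fun s => (s.x, s.y) = (xv, yv) ∧ omegaRV S s = ω) =
      if AgreesX ω xv ∧ AgreesY ω yv then (∏ i, μ (xv i, yv i)) * (1 / 2) ^ n else 0 := by
    have hq := hq1 xv yv
    rw [Fintype.sum_prod_type] at hq
    unfold pr
    simp only [Fintype.sum_prod_type, omegaRV_eq_iff, jointP, Sample.x, Sample.y, Sample.a,
      Sample.b, Prod.mk.injEq]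
    rw [Finset.sum_eq_single xv (fun x _ hx => by simp [hx]) (by simp),
      Finset.sum_eq_single yv (fun y _ hy => by simp [hy]) (by simp)]
    by_cases hc : AgreesX ω xv ∧ AgreesY ω yv
    · simp only [hc, and_self, and_true, true_and, if_true, Finset.sum_ite_eq',
        Finset.mem_univ]
      simp only [← Finset.sum_mul, ← Finset.mul_sum, hq, mul_one]
    · simp [hc]
  rw [hsum]
  by_cases hX : AgreesX ω xv
  · by_cases hY : AgreesY ω yv
    · simp only [hX, hY, and_self, if_true]
      rw [← mul_assoc, ← Finset.prod_mul_distrib]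
      congr 1
      refine Finset.prod_congr rfl fun i _ => ?_
      cases hm : ω.1 i with
      | inl u => simp [hX.1 i u hm]
      | inr v => simp [hY.1 i v hm]
    · simp [hY]
  · simp [hX]

/-- The paper's Claim 2.18: in the augmented distribution `P` of `(Ω, X, Y, A, B)`, the
question tuples `X` and `Y` are conditionally independent given the dependency-breaking
variable `Ω`. -/
theorem conditional_independence_given_omega
    {𝒳 𝒴 𝒜 ℬ : Type*} [Fintype 𝒳] [Fintype 𝒴] [Fintype 𝒜] [Fintype ℬ] {n : ℕ}
    (μ : 𝒳 × 𝒴 → ℝ) (hμ0 : ∀ p, 0 ≤ μ p) (hμ1 : ∑ p, μ p = 1)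
    (q : (Fin n → 𝒳) → (Fin n → 𝒴) → (Fin n → 𝒜) × (Fin n → ℬ) → ℝ)
    (hq0 : ∀ x y ab, 0 ≤ q x y ab) (hq1 : ∀ x y, ∑ ab, q x y ab = 1)
    (hNSA : ∀ x y y' a, (∑ b, q x y (a, b)) = ∑ b, q x y' (a, b))
    (hNSB : ∀ x x' y b, (∑ a, q x y (a, b)) = ∑ a, q x' y (a, b))
    (S : Finset (Fin n)) (ω : OmegaType 𝒳 𝒴 S)
    (hω : 0 < pr (jointP μ q) (fun s => omegaRV S s = ω)) :
    ∀ (xv : Fin n → 𝒳) (yv : Fin n → 𝒴),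
      condDist (jointP μ q) (fun s => (s.x, s.y)) (fun s => omegaRV S s = ω) (xv, yv)
        = condDist (jointP μ q) (fun s => s.x) (fun s => omegaRV S s = ω) xv
          * condDist (jointP μ q) (fun s => s.y) (fun s => omegaRV S s = ω) yv := by
  exact condDist_pair_of_product _ _ _ _ hω.ne' _ _ (pr_questions_omega μ q hq1 ω)

end
end

section
/- Let 𝒳_1, …, 𝒳_n and 𝒜 be finite nonempty sets, let ρ be a probability distribution on 𝒳_1 × ⋯ × 𝒳_n × 𝒜, and let σ = σ_1 ⊗ ⋯ ⊗ σ_n ⊗ σ_𝒜 be a fully product probability distribution on the same space such that ρ is absolutely continuous with respect to σ. Then Σ_{i=1}^n I(X_i : A)_ρ ≤ D(ρ ∥ σ), where I(X_i : A)_ρ denotes the Shannon mutual information (base-2 logarithm) between the i-th coordinate X_i and the 𝒜-coordinate A under ρ, and D(· ∥ ·) denotes the Kullback–Leibler divergence (base 2). -/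
/-!
Write `p i`, `q i`, `r` for the marginals of `ρ` on `(X_i, A)`, `X_i` and `A`. On the support of `ρ`,

`log (ρ / (∏ σ_i · σ_A)) - ∑ i, log (p i / (q i · r))`
  `= log (ρ / (r · ∏ (p i / r))) + ∑ i, log (q i / σ_i) + log (r / σ_A)`,

so averaging over `ρ` writes `D(ρ ∥ σ) - ∑ i, I(X_i : A)` as a sum of relative entropies: of `ρ`
against the distribution with marginal `r` on `A` under which the `X_i` are conditionally
independent given `A`, of each `q i` against `σ_i`, and of `r` against `σ_A`. Each is nonnegative by
Gibbs' inequality (`gibbs`), and `sum_coordJoint_mul` moves expectations between `ρ` and its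
marginals.
-/

open Finset
open scoped Classical

noncomputable section

/-- Joint distribution of the `i`-th coordinate `X_i` and the side variable `A`
under a distribution `ρ` on `(∀ i, 𝒳 i) × 𝒜`. -/
def coordJoint {n : ℕ} {𝒳 : Fin n → Type*} [∀ i, Fintype (𝒳 i)] {𝒜 : Type*} [Fintype 𝒜]
    (ρ : (∀ i, 𝒳 i) × 𝒜 → ℝ) (i : Fin n) (p : 𝒳 i × 𝒜) : ℝ :=
  ∑ x : ∀ i, 𝒳 i, if x i = p.1 then ρ (x, p.2) else 0

/-- The convention `0 * log _ = 0` makes the case split in `klDiv` redundant. -/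
lemma klDiv_eq {ζ : Type*} [Fintype ζ] (f g : ζ → ℝ) :
    klDiv f g = (∑ z, f z * Real.log (f z / g z)) / Real.log 2 := by
  unfold klDiv
  rw [Finset.sum_div]
  refine Finset.sum_congr rfl fun z _ => ?_
  split_ifs with h
  · simp [h]
  · rw [Real.logb, mul_div_assoc]

/-- Gibbs' inequality for nonnegative functions, the mass of `g` being at most that of `f`. -/
lemma gibbs {ζ : Type*} [Fintype ζ] (f g : ζ → ℝ) (hf : ∀ z, 0 ≤ f z) (hg : ∀ z, 0 ≤ g z)
    (hfg : ∀ z, g z = 0 → f z = 0) (hsum : ∑ z, g z ≤ ∑ z, f z) :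
    0 ≤ ∑ z, f z * Real.log (f z / g z) := by
  have key : ∀ z, f z - g z ≤ f z * Real.log (f z / g z) := by
    intro z
    rcases (hf z).eq_or_lt with h | h
    · rw [← h]
      simpa using hg z
    · have hgz : 0 < g z := lt_of_le_of_ne (hg z) fun h0 => h.ne' (hfg z h0.symm)
      have h1 := Real.one_sub_inv_le_log_of_pos (div_pos h hgz)
      calc f z - g z = f z * (1 - (f z / g z)⁻¹) := by field_simp
        _ ≤ _ := mul_le_mul_of_nonneg_left h1 h.le
  calc 0 ≤ ∑ z, (f z - g z) := by rw [Finset.sum_sub_distrib]; linarith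
    _ ≤ _ := Finset.sum_le_sum fun z _ => key z

section Marginals

variable {n : ℕ} {𝒳 : Fin n → Type*} [∀ i, Fintype (𝒳 i)] {𝒜 : Type*} [Fintype 𝒜]
  (ρ : (∀ i, 𝒳 i) × 𝒜 → ℝ)

lemma sum_coordJoint_mul (i : Fin n) (φ : 𝒳 i × 𝒜 → ℝ) :
    ∑ p, coordJoint ρ i p * φ p = ∑ z, ρ z * φ (z.1 i, z.2) := by
  simp only [coordJoint, Finset.sum_mul, Fintype.sum_prod_type_right, ite_mul, zero_mul]
  refine Finset.sum_congr rfl fun a _ => ?_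
  rw [Finset.sum_comm]
  refine Finset.sum_congr rfl fun x _ => ?_
  simp

lemma sum_coordJoint_fst (i : Fin n) (a : 𝒜) :
    ∑ u, coordJoint ρ i (u, a) = ∑ x, ρ (x, a) := by
  simp only [coordJoint]
  rw [Finset.sum_comm]
  simp

lemma le_coordJoint (hρ0 : ∀ z, 0 ≤ ρ z) (i : Fin n) (x : ∀ i, 𝒳 i) (a : 𝒜) :
    ρ (x, a) ≤ coordJoint ρ i (x i, a) := by
  have h := Finset.single_le_sum
    (f := fun y : ∀ i, 𝒳 i => if y i = x i then ρ (y, a) else 0) (s := Finset.univ)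
    (fun y _ => by split_ifs; exacts [hρ0 _, le_rfl]) (Finset.mem_univ x)
  simpa [coordJoint] using h

lemma coordJoint_nonneg (hρ0 : ∀ z, 0 ≤ ρ z) (i : Fin n) (p : 𝒳 i × 𝒜) :
    0 ≤ coordJoint ρ i p :=
  Finset.sum_nonneg fun y _ => by split_ifs; exacts [hρ0 _, le_rfl]

/-- The conditionally independent coupling `r a * ∏ i, (p i (x i, a) / r a)` has the same mass
as `ρ`. -/
lemma sum_condIndep :
    ∑ z : (∀ i, 𝒳 i) × 𝒜, (∑ x, ρ (x, z.2)) *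
      ∏ i, (coordJoint ρ i (z.1 i, z.2) / ∑ x, ρ (x, z.2)) = ∑ z, ρ z := by
  simp only [Fintype.sum_prod_type_right]
  refine Finset.sum_congr rfl fun a _ => ?_
  rw [← Finset.mul_sum]
  have h := Finset.prod_univ_sum (fun i => (Finset.univ : Finset (𝒳 i)))
    (fun i u => coordJoint ρ i (u, a) / ∑ x, ρ (x, a))
  rw [Fintype.piFinset_univ] at h
  rw [← h]
  by_cases h0 : ∑ x, ρ (x, a) = 0
  · simp [h0]
  · simp [← Finset.sum_div, sum_coordJoint_fst, div_self h0]

end Marginals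

/-- Classical Raz's Lemma (the fully classical case of the paper's Lemma 2.4): if `ρ` is a
distribution on `𝒳_1 × ⋯ × 𝒳_n × 𝒜` absolutely continuous with respect to a fully product
distribution `σ = σ_1 ⊗ ⋯ ⊗ σ_n ⊗ σ_𝒜`, then `∑ i, I(X_i : A)_ρ ≤ D(ρ ∥ σ)`. -/
theorem classical_raz_lemma {n : ℕ} (𝒳 : Fin n → Type*) [∀ i, Fintype (𝒳 i)]
    [∀ i, Nonempty (𝒳 i)] (𝒜 : Type*) [Fintype 𝒜] [Nonempty 𝒜]
    (ρ : (∀ i, 𝒳 i) × 𝒜 → ℝ) (hρ0 : ∀ z, 0 ≤ ρ z) (hρ1 : ∑ z, ρ z = 1)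
    (σX : ∀ i, 𝒳 i → ℝ) (σA : 𝒜 → ℝ)
    (hσX0 : ∀ i u, 0 ≤ σX i u) (hσX1 : ∀ i, ∑ u, σX i u = 1)
    (hσA0 : ∀ a, 0 ≤ σA a) (hσA1 : ∑ a, σA a = 1)
    (habs : ∀ x a, (∏ i, σX i (x i)) * σA a = 0 → ρ (x, a) = 0) :
    ∑ i, mutualInfo (coordJoint ρ i) ≤
      klDiv ρ (fun z => (∏ i, σX i (z.1 i)) * σA z.2) := by
  have hlog2 : 0 < Real.log 2 := Real.log_pos one_lt_two
  set r : 𝒜 → ℝ := fun a => ∑ x, ρ (x, a) with hr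
  set q : ∀ i, 𝒳 i → ℝ := fun i u => ∑ a, coordJoint ρ i (u, a) with hq
  have hp0 := coordJoint_nonneg ρ hρ0
  have hr0 : ∀ a, 0 ≤ r a := fun a => Finset.sum_nonneg fun x _ => hρ0 _
  have hq0 : ∀ i u, 0 ≤ q i u := fun i u => Finset.sum_nonneg fun a _ => hp0 i _
  have hρr : ∀ x a, ρ (x, a) ≤ r a := fun x a =>
    Finset.single_le_sum (f := fun x => ρ (x, a)) (fun x _ => hρ0 _) (Finset.mem_univ x)
  have hpq : ∀ i u a, coordJoint ρ i (u, a) ≤ q i u := fun i u a =>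
    Finset.single_le_sum (f := fun a => coordJoint ρ i (u, a)) (fun a _ => hp0 i _)
      (Finset.mem_univ a)
  -- The mutual informations as expectations over `ρ`.
  have hI : ∀ i, mutualInfo (coordJoint ρ i) =
      (∑ z, ρ z * Real.log (coordJoint ρ i (z.1 i, z.2) / (q i (z.1 i) * r z.2)))
        / Real.log 2 := by
    intro i
    rw [mutualInfo, klDiv_eq]
    simp only [sum_coordJoint_fst]
    rw [sum_coordJoint_mul ρ i (fun p => Real.log (coordJoint ρ i p / (q i p.1 * r p.2)))]
  -- The three kinds of nonnegative relative entropy.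
  have hD1 : 0 ≤ ∑ z, ρ z * Real.log (ρ z /
      (r z.2 * ∏ i, (coordJoint ρ i (z.1 i, z.2) / r z.2))) := by
    refine gibbs ρ _ hρ0 (fun z => mul_nonneg (hr0 _)
      (Finset.prod_nonneg fun i _ => div_nonneg (hp0 i _) (hr0 _))) ?_ (sum_condIndep ρ).le
    rintro ⟨x, a⟩ h
    by_contra hne
    have hpos : 0 < ρ (x, a) := lt_of_le_of_ne (hρ0 _) (Ne.symm hne)
    have hrpos : 0 < r a := hpos.trans_le (hρr x a)
    exact (mul_pos hrpos (Finset.prod_pos fun i _ =>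
      div_pos (hpos.trans_le (le_coordJoint ρ hρ0 i x a)) hrpos)).ne' h
  have hD2 : ∀ i, 0 ≤ ∑ z, ρ z * Real.log (q i (z.1 i) / σX i (z.1 i)) := by
    intro i
    rw [← sum_coordJoint_mul ρ i (fun p => Real.log (q i p.1 / σX i p.1)),
      Fintype.sum_prod_type]
    simp only [← Finset.sum_mul]
    refine gibbs (q i) (σX i) (hq0 i) (hσX0 i) ?_ ?_
    · intro u hu
      refine Finset.sum_eq_zero fun a _ => Finset.sum_eq_zero fun x _ => ?_
      split_ifs with hx
      · refine habs x a ?_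
        rw [Finset.prod_eq_zero (Finset.mem_univ i) (by simpa [hx] using hu), zero_mul]
      · rfl
    · have h := sum_coordJoint_mul ρ i (fun _ => 1)
      simp only [mul_one, hρ1, Fintype.sum_prod_type (f := coordJoint ρ i)] at h
      rw [hσX1]
      exact h.ge
  have hD3 : 0 ≤ ∑ z, ρ z * Real.log (r z.2 / σA z.2) := by
    rw [Fintype.sum_prod_type_right]
    simp only [← Finset.sum_mul]
    refine gibbs r σA hr0 hσA0 ?_ ?_
    · exact fun a ha => Finset.sum_eq_zero fun x _ => habs x a (by rw [ha, mul_zero])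
    · rw [hσA1, ← hρ1, Fintype.sum_prod_type_right]
  have hpt : ∀ z, ρ z * Real.log (ρ z / ((∏ i, σX i (z.1 i)) * σA z.2)) =
      ∑ i, ρ z * Real.log (coordJoint ρ i (z.1 i, z.2) / (q i (z.1 i) * r z.2)) +
      (ρ z * Real.log (ρ z / (r z.2 * ∏ i, (coordJoint ρ i (z.1 i, z.2) / r z.2))) +
        ∑ i, ρ z * Real.log (q i (z.1 i) / σX i (z.1 i)) +
        ρ z * Real.log (r z.2 / σA z.2)) := by
    rintro ⟨x, a⟩
    by_cases h0 : ρ (x, a) = 0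
    · simp [h0]
    have hpos : 0 < ρ (x, a) := lt_of_le_of_ne (hρ0 _) (Ne.symm h0)
    have hrne : r a ≠ 0 := (hpos.trans_le (hρr x a)).ne'
    have hpne : ∀ i, coordJoint ρ i (x i, a) ≠ 0 := fun i =>
      (hpos.trans_le (le_coordJoint ρ hρ0 i x a)).ne'
    have hqne : ∀ i, q i (x i) ≠ 0 := fun i =>
      (hpos.trans_le ((le_coordJoint ρ hρ0 i x a).trans (hpq i (x i) a))).ne'
    have hσne : (∏ i, σX i (x i)) * σA a ≠ 0 := fun h => h0 (habs x a h)
    have hσXne : ∀ i, σX i (x i) ≠ 0 := fun i =>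
      Finset.prod_ne_zero_iff.mp (left_ne_zero_of_mul hσne) i (Finset.mem_univ i)
    have hσAne : σA a ≠ 0 := right_ne_zero_of_mul hσne
    have hdne : ∀ i, coordJoint ρ i (x i, a) / r a ≠ 0 := fun i => div_ne_zero (hpne i) hrne
    simp only [← Finset.mul_sum, ← mul_add]
    congr 1
    rw [Real.log_div h0 hσne, Real.log_mul (left_ne_zero_of_mul hσne) hσAne,
      Real.log_prod fun i _ => hσXne i,
      Real.log_div h0 (mul_ne_zero hrne (Finset.prod_ne_zero_iff.mpr fun i _ => hdne i)),
      Real.log_mul hrne (Finset.prod_ne_zero_iff.mpr fun i _ => hdne i),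
      Real.log_prod fun i _ => hdne i, Real.log_div hrne hσAne]
    have e1 : ∀ i, Real.log (coordJoint ρ i (x i, a) / (q i (x i) * r a)) =
        Real.log (coordJoint ρ i (x i, a) / r a) - Real.log (q i (x i)) := fun i => by
      rw [Real.log_div (hpne i) (mul_ne_zero (hqne i) hrne), Real.log_mul (hqne i) hrne,
        Real.log_div (hpne i) hrne]
      ring
    have e2 : ∀ i, Real.log (q i (x i) / σX i (x i)) =
        Real.log (q i (x i)) - Real.log (σX i (x i)) := fun i =>
      Real.log_div (hqne i) (hσXne i)
    simp only [e1, e2, Finset.sum_sub_distrib]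
    ring
  simp only [hI]
  rw [klDiv_eq, ← Finset.sum_div]
  refine div_le_div_of_nonneg_right ?_ hlog2.le
  simp only [hpt, Finset.sum_add_distrib]
  rw [Finset.sum_comm (s := Finset.univ (α := Fin n))]
  have hD2' : 0 ≤ ∑ z, ∑ i, ρ z * Real.log (q i (z.1 i) / σX i (z.1 i)) := by
    rw [Finset.sum_comm]
    exact Finset.sum_nonneg fun i _ => hD2 i
  linarith

end
end

section
/- Fix a subset S ⊆ [n] and a subset T ⊆ [n] ∖ S, and let A_{−(S∪T)} denote Alice's answers in the coordinates outside S ∪ T. Then for every value ω of Ω and every value x_T of X_T with positive probability: conditioned on (Ω = ω, X_T = x_T), the random variables Y and A_{−(S∪T)} are independent, and the conditional distribution of Y given (Ω = ω, X_T = x_T) equals its conditional distribution given Ω = ω alone; that is, P_{Y A_{−(S∪T)} | Ω = ω, X_T = x_T} = P_{Y | Ω = ω} · P_{A_{−(S∪T)} | Ω = ω, X_T = x_T}. -/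
/-! The event `Ω = ω` reveals in every coordinate one of the two questions, so on this event the
weight `∏ μ (x i, y i)` of the questions is a product of a function of `x` (`aliceFactor`) and a
function of `y` (`bobFactor`), as `sum_coins_eq` shows: `X` and `Y` are independent given
`Ω = ω`. By no-signaling, the law of Alice's answers given `(x, y)` does not depend on `y`.
Hence (`pr_rectangle`) the probability of `Ω = ω` together with separate constraints on `X`,
`Y` and `A` is a term for `Y` times a term for `(X, A)`. The identity follows by writing all five
probabilities in it in this form and cancelling the normalising factors, which are nonzero by
positivity of the conditioning event. -/

open Finset
open scoped Classical

noncomputable section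

variable {𝒳 𝒴 𝒜 ℬ : Type*} [Fintype 𝒳] [Fintype 𝒴] [Fintype 𝒜] [Fintype ℬ] {n : ℕ}

/-- Alice's factor of the law of the questions restricted to `Ω = ω`. A coordinate where `ω`
reveals `X_i` contributes an indicator; a coordinate where it reveals `Y_i = v` contributes
`μ (x i, v)`. The final indicator enforces the prescribed value of `X_S`. -/
def aliceFactor (μ : 𝒳 × 𝒴 → ℝ) {S : Finset (Fin n)} (ω : OmegaType 𝒳 𝒴 S)
    (x : Fin n → 𝒳) : ℝ :=
  (∏ i, Sum.elim (fun u => if x i = u then 1 else 0) (fun v => μ (x i, v)) (ω.1 i)) *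
    if (fun i : {i : Fin n // i ∈ S} => x i.1) = ω.2.1 then 1 else 0

/-- Bob's factor of the law of the questions restricted to `Ω = ω`, symmetric to
`aliceFactor`. -/
def bobFactor (μ : 𝒳 × 𝒴 → ℝ) {S : Finset (Fin n)} (ω : OmegaType 𝒳 𝒴 S)
    (y : Fin n → 𝒴) : ℝ :=
  (∏ i, Sum.elim (fun u => μ (u, y i)) (fun v => if y i = v then 1 else 0) (ω.1 i)) *
    if (fun i : {i : Fin n // i ∈ S} => y i.1) = ω.2.2 then 1 else 0

lemma aliceFactor_nonneg (μ : 𝒳 × 𝒴 → ℝ) (hμ0 : ∀ p, 0 ≤ μ p) {S : Finset (Fin n)}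
    (ω : OmegaType 𝒳 𝒴 S) (x : Fin n → 𝒳) : 0 ≤ aliceFactor μ ω x := by
  unfold aliceFactor
  refine mul_nonneg (Finset.prod_nonneg fun i _ => ?_) (by split_ifs <;> norm_num)
  rcases ω.1 i with u | v
  · simp only [Sum.elim_inl]
    split_ifs <;> norm_num
  · exact hμ0 _

/-- Summing out the coins on the event `Ω = ω` splits the question weight into a function of
`x` times a function of `y`, because each `Ω_i` reveals one of the two questions. -/
lemma sum_coins_eq (μ : 𝒳 × 𝒴 → ℝ) {S : Finset (Fin n)} (ω : OmegaType 𝒳 𝒴 S)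
    (x : Fin n → 𝒳) (y : Fin n → 𝒴) (a : Fin n → 𝒜) (b : Fin n → ℬ) :
    (∑ d : Fin n → Bool, if omegaRV S ((x, y, a, b, d) : Sample 𝒳 𝒴 𝒜 ℬ n) = ω
        then ∏ i, μ (x i, y i) else 0)
      = aliceFactor μ ω x * bobFactor μ ω y := by
  have hprod : (∑ d : Fin n → Bool,
      if (∀ i, (if d i then Sum.inl (x i) else Sum.inr (y i)) = ω.1 i)
        then ∏ i, μ (x i, y i) else 0)
      = (∏ i, Sum.elim (fun u => if x i = u then (1 : ℝ) else 0) (fun v => μ (x i, v)) (ω.1 i)) *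
        ∏ i, Sum.elim (fun u => μ (u, y i)) (fun v => if y i = v then (1 : ℝ) else 0) (ω.1 i) := by
    -- The coins are independent, so the sum over `d` is a product of two-term sums.
    have hd : ∀ d : Fin n → Bool,
        (if (∀ i, (if d i then Sum.inl (x i) else Sum.inr (y i)) = ω.1 i)
          then ∏ i, μ (x i, y i) else 0)
        = ∏ i, if (if d i then Sum.inl (x i) else Sum.inr (y i)) = ω.1 i
            then μ (x i, y i) else 0 := by
      intro d
      rw [Finset.prod_ite_zero]
      simp
    rw [Finset.sum_congr rfl fun d _ => hd d, ← Finset.prod_mul_distrib,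
      ← Fintype.prod_sum (fun i (e : Bool) =>
        if (if e then Sum.inl (x i) else Sum.inr (y i)) = ω.1 i then μ (x i, y i) else 0)]
    refine Finset.prod_congr rfl fun i _ => ?_
    rcases ω.1 i with u | v
    · by_cases h : x i = u <;> simp [h]
    · by_cases h : y i = v <;> simp [h]
  have hev : ∀ d : Fin n → Bool, omegaRV S ((x, y, a, b, d) : Sample 𝒳 𝒴 𝒜 ℬ n) = ω ↔
      (∀ i, (if d i then Sum.inl (x i) else Sum.inr (y i)) = ω.1 i) ∧
      (fun i : {i : Fin n // i ∈ S} => x i.1) = ω.2.1 ∧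
      (fun i : {i : Fin n // i ∈ S} => y i.1) = ω.2.2 := by
    intro d
    rw [← funext_iff]
    exact Prod.ext_iff.trans (and_congr Iff.rfl Prod.ext_iff)
  simp only [hev]
  unfold aliceFactor bobFactor
  rw [mul_mul_mul_comm, ← hprod]
  by_cases h1 : (fun i : {i : Fin n // i ∈ S} => x i.1) = ω.2.1 <;>
    by_cases h2 : (fun i : {i : Fin n // i ∈ S} => y i.1) = ω.2.2 <;>
    simp [h1, h2]

/-- On `Ω = ω`, the probability of a rectangle event in `(X, Y, A)` factors into a term depending
only on the constraint on `Y` and a term depending only on those on `X` and `A`. By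
no-signaling, Alice's marginal may be computed at an arbitrary reference question `y₀`. -/
lemma pr_rectangle (μ : 𝒳 × 𝒴 → ℝ)
    (q : (Fin n → 𝒳) → (Fin n → 𝒴) → (Fin n → 𝒜) × (Fin n → ℬ) → ℝ)
    (hNSA : ∀ x y y' a, (∑ b, q x y (a, b)) = ∑ b, q x y' (a, b))
    {S : Finset (Fin n)} (ω : OmegaType 𝒳 𝒴 S) (y₀ : Fin n → 𝒴)
    (p : (Fin n → 𝒳) → Prop) (r : (Fin n → 𝒴) → Prop) (t : (Fin n → 𝒜) → Prop)
    (E : Sample 𝒳 𝒴 𝒜 ℬ n → Prop)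
    (hE : ∀ s, E s ↔ omegaRV S s = ω ∧ p s.x ∧ r s.y ∧ t s.a) :
    pr (jointP μ q) E
      = (1 / 2) ^ n * (∑ y, if r y then bobFactor μ ω y else 0) *
        ∑ x, if p x then
          aliceFactor μ ω x * ∑ a, (if t a then ∑ b, q x y₀ (a, b) else 0) else 0 := by
  have hinner : ∀ (x : Fin n → 𝒳) (y : Fin n → 𝒴) (a : Fin n → 𝒜) (b : Fin n → ℬ),
      (∑ d : Fin n → Bool, if E (x, y, a, b, d) then jointP μ q (x, y, a, b, d) else 0)
      = if p x ∧ r y ∧ t a then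
          (1 / 2) ^ n * (aliceFactor μ ω x * bobFactor μ ω y) * q x y (a, b) else 0 := by
    intro x y a b
    by_cases h : p x ∧ r y ∧ t a
    · rw [if_pos h, ← sum_coins_eq μ ω x y a b, Finset.mul_sum, Finset.sum_mul]
      refine Finset.sum_congr rfl fun d _ => ?_
      have hiff : E (x, y, a, b, d) ↔ omegaRV S ((x, y, a, b, d) : Sample 𝒳 𝒴 𝒜 ℬ n) = ω :=
        (hE _).trans (and_iff_left h)
      by_cases hω : omegaRV S ((x, y, a, b, d) : Sample 𝒳 𝒴 𝒜 ℬ n) = ω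
      · rw [if_pos (hiff.2 hω), if_pos hω]
        simp only [jointP, Sample.x, Sample.y, Sample.a, Sample.b]
        ring
      · rw [if_neg (mt hiff.1 hω), if_neg hω]
        simp
    · rw [if_neg h]
      exact Finset.sum_eq_zero fun d _ => if_neg fun hd => h ((hE (x, y, a, b, d)).1 hd).2
  unfold pr
  simp only [Fintype.sum_prod_type, hinner]
  rw [mul_assoc, Finset.sum_mul_sum, Finset.sum_comm, Finset.mul_sum]
  refine Finset.sum_congr rfl fun y _ => ?_
  rw [Finset.mul_sum]
  refine Finset.sum_congr rfl fun x _ => ?_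
  by_cases hx : p x <;> by_cases hy : r y <;> simp only [hx, hy, true_and, false_and, if_true,
    if_false, Finset.sum_const_zero, mul_zero, zero_mul]
  simp only [Finset.mul_sum]
  refine Finset.sum_congr rfl fun a _ => ?_
  by_cases ha : t a
  · simp only [ha, if_true]
    rw [← Finset.mul_sum, hNSA x y y₀ a]
    ring
  · simp [ha]

/-- No-signaling identity from the proof of the paper's Lemma 3.5: conditioned on
`(Ω = ω, X_T = x_T)`, the tuple `Y` and Alice's answers `A_{-(S∪T)}` outside `S ∪ T` are
independent, and the conditional law of `Y` equals its law given `Ω = ω` alone: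
`P_{Y A_{-(S∪T)} | ω, x_T} = P_{Y | ω} · P_{A_{-(S∪T)} | ω, x_T}`. -/
theorem no_signaling_factorization
    {𝒳 𝒴 𝒜 ℬ : Type*} [Fintype 𝒳] [Fintype 𝒴] [Fintype 𝒜] [Fintype ℬ] {n : ℕ}
    (μ : 𝒳 × 𝒴 → ℝ) (hμ0 : ∀ p, 0 ≤ μ p) (hμ1 : ∑ p, μ p = 1)
    (q : (Fin n → 𝒳) → (Fin n → 𝒴) → (Fin n → 𝒜) × (Fin n → ℬ) → ℝ)
    (hq0 : ∀ x y ab, 0 ≤ q x y ab) (hq1 : ∀ x y, ∑ ab, q x y ab = 1)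
    (hNSA : ∀ x y y' a, (∑ b, q x y (a, b)) = ∑ b, q x y' (a, b))
    (hNSB : ∀ x x' y b, (∑ a, q x y (a, b)) = ∑ a, q x' y (a, b))
    (S T : Finset (Fin n)) (hTS : Disjoint T S)
    (ω : OmegaType 𝒳 𝒴 S) (xt : {i : Fin n // i ∈ T} → 𝒳)
    (hpos : 0 < pr (jointP μ q)
      (fun s => omegaRV S s = ω ∧ (fun i : {i : Fin n // i ∈ T} => s.x i.1) = xt)) :
    ∀ (yv : Fin n → 𝒴) (av : {i : Fin n // i ∉ S ∪ T} → 𝒜),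
      condDist (jointP μ q)
          (fun s => (s.y, fun i : {i : Fin n // i ∉ S ∪ T} => s.a i.1))
          (fun s => omegaRV S s = ω ∧ (fun i : {i : Fin n // i ∈ T} => s.x i.1) = xt)
          (yv, av)
        = condDist (jointP μ q) (fun s => s.y) (fun s => omegaRV S s = ω) yv *
          condDist (jointP μ q)
            (fun s => fun i : {i : Fin n // i ∉ S ∪ T} => s.a i.1)
            (fun s => omegaRV S s = ω ∧ (fun i : {i : Fin n // i ∈ T} => s.x i.1) = xt)
            av := by
  intro yv av
  have key := pr_rectangle μ q hNSA ω yv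
  set c : ℝ := (1 / 2) ^ n
  have hc : c ≠ 0 := by positivity
  set inT : (Fin n → 𝒳) → Prop := fun x => (fun i : {i : Fin n // i ∈ T} => x i.1) = xt
  set isAv : (Fin n → 𝒜) → Prop := fun a => (fun i : {i : Fin n // i ∉ S ∪ T} => a i.1) = av
  set G : ℝ := ∑ y, bobFactor μ ω y with hG
  set F : ℝ := ∑ x, aliceFactor μ ω x with hF
  set FT : ℝ := ∑ x, if inT x then aliceFactor μ ω x else 0 with hFT
  set K : ℝ := ∑ x, if inT x then
    aliceFactor μ ω x * ∑ a, (if isAv a then ∑ b, q x yv (a, b) else 0) else 0 with hK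
  have hone : ∀ x, ∑ a, ∑ b, q x yv (a, b) = 1 := by
    intro x
    rw [← hq1 x yv, Fintype.sum_prod_type]
  have e1 := key inT (fun y => y = yv) isAv
    (fun s => (s.y, fun i : {i : Fin n // i ∉ S ∪ T} => s.a i.1) = (yv, av) ∧
      (omegaRV S s = ω ∧ (fun i : {i : Fin n // i ∈ T} => s.x i.1) = xt))
    (fun s => by simp only [Prod.mk.injEq, inT, isAv]; tauto)
  have e2 := key inT (fun _ => True) (fun _ => True)
    (fun s => omegaRV S s = ω ∧ (fun i : {i : Fin n // i ∈ T} => s.x i.1) = xt)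
    (fun s => by simp only [inT]; tauto)
  have e3 := key (fun _ => True) (fun y => y = yv) (fun _ => True)
    (fun s => s.y = yv ∧ omegaRV S s = ω) (fun s => by tauto)
  have e4 := key (fun _ => True) (fun _ => True) (fun _ => True)
    (fun s => omegaRV S s = ω) (fun s => by tauto)
  have e5 := key inT (fun _ => True) isAv
    (fun s => (fun i : {i : Fin n // i ∉ S ∪ T} => s.a i.1) = av ∧
      (omegaRV S s = ω ∧ (fun i : {i : Fin n // i ∈ T} => s.x i.1) = xt))
    (fun s => by simp only [inT, isAv]; tauto)
  simp only [if_true, hone, mul_one, ← hG, ← hF, ← hFT] at e1 e2 e3 e4 e5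
  rw [e2] at hpos
  have hG0 : G ≠ 0 := by
    rintro h
    simp [h] at hpos
  have hFT0 : FT ≠ 0 := by
    rintro h
    simp [h] at hpos
  have hnn := aliceFactor_nonneg μ hμ0 ω
  have hFTpos : 0 < FT := lt_of_le_of_ne
    (Finset.sum_nonneg fun x _ => by split_ifs <;> [exact hnn x; exact le_rfl]) hFT0.symm
  have hF0 : F ≠ 0 := by
    refine (hFTpos.trans_le (Finset.sum_le_sum fun x _ => ?_)).ne'
    split_ifs <;> [exact le_rfl; exact hnn x]
  unfold condDist
  rw [e1, e2, e3, e4, e5]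
  field_simp

end
end
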